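/- arXiv:2108.05474 — 5 statements merged into one kernel-verified Lean document; each statement's English description precedes it below -/
import Mathlib

section
/- Fix ε > 0. There exists c > 0 such that for all sufficiently large k: for every k-DFA D with at most k² states, the number of permutations τ ∈ S_k with Σ_{j=1}^k Y_j(τ) < (1/4 − ε)k² is strictly less than exp(−ck)·k!; equivalently, if τ ∈ S_k is uniformly random then P(Σ_{j=1}^k Y_j(τ) < (1/4 − ε)k²) < exp(−ck). -/
/-- A weighted DFA on the alphabet `[k]` (modelled as `Fin k`) with state type `V`:
a transition function, a root state, and a cost function into `ℕ∞`. -/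
structure WDFA (k : ℕ) (V : Type*) where
  trans : V → Fin k → V
  root : V
  cost : V → Fin k → ℕ∞

/-- The final state of the walk from `v` reading the word `w`. -/
def WDFA.walkEnd {k : ℕ} {V : Type*} (D : WDFA k V) : V → List (Fin k) → V
  | v, [] => v
  | v, t :: w => D.walkEnd (D.trans v t) w

/-- The cost of reading the word `w` starting from state `v`. -/
def WDFA.wordCost {k : ℕ} {V : Type*} (D : WDFA k V) : V → List (Fin k) → ℕ∞
  | _, [] => 0
  | v, t :: w => D.cost v t + D.wordCost (D.trans v t) w

/-- A `k`-DFA: a weighted DFA on alphabet `[k]` in which, at every state `v`, the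
costs `c(v, ·)` form a bijection onto `{1, …, k}`. -/
def WDFA.IsKDFA {k : ℕ} {V : Type*} (D : WDFA k V) : Prop :=
  ∀ v : V, ∃ π : Equiv.Perm (Fin k), ∀ t : Fin k, D.cost v t = (((π t : ℕ) + 1 : ℕ) : ℕ∞)

/-- A permutation `τ ∈ S_k` read as the word `τ(1), …, τ(k)`. -/
def permWord {k : ℕ} (τ : Equiv.Perm (Fin k)) : List (Fin k) :=
  (List.finRange k).map τ

/-- `Y_j(τ)` for a `k`-DFA `D` and a permutation `τ`: with `v_{j−1}` the state reached
from the root after reading the first `j−1` letters of `τ`, and `C_j = c(v_{j−1}, τ(j))`,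
`Y_j(τ)` is the number of previously read letters `τ(j')`, `j' < j`, whose cost at
`v_{j−1}` is below `C_j`. (Here `j : Fin k` represents the index `j+1 ∈ {1,…,k}`.) -/
noncomputable def Yval {k : ℕ} {V : Type*} (D : WDFA k V) (τ : Equiv.Perm (Fin k))
    (j : Fin k) : ℕ :=
  Nat.card {j' : Fin k // j' < j ∧
    D.cost (D.walkEnd D.root ((permWord τ).take (j : ℕ))) (τ j') <
    D.cost (D.walkEnd D.root ((permWord τ).take (j : ℕ))) (τ j)}

namespace FewPerm
open Finset

/-- Positions before `j`. -/
def pre (k j : ℕ) : Finset (Fin k) := univ.filter (fun i => i.val < j)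
/-- Positions from `j` on. -/
def suf (k j : ℕ) : Finset (Fin k) := univ.filter (fun i => j ≤ i.val)

lemma mem_pre {k j : ℕ} {i : Fin k} : i ∈ pre k j ↔ i.val < j := by simp [pre]
lemma mem_suf {k j : ℕ} {i : Fin k} : i ∈ suf k j ↔ j ≤ i.val := by simp [suf]

lemma pre_succ {k j : ℕ} (hj : j < k) : pre k (j+1) = insert ⟨j, hj⟩ (pre k j) := by
  ext i; simp only [mem_pre, mem_insert, Fin.ext_iff]; omega

lemma notMem_pre {k j : ℕ} (hj : j < k) : (⟨j, hj⟩ : Fin k) ∉ pre k j := by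
  simp [mem_pre]

lemma sum_pre_suf {k : ℕ} (j : ℕ) (f : Fin k → ℝ) :
    ∑ i ∈ pre k j, f i + ∑ i ∈ suf k j, f i = ∑ i, f i := by
  rw [← Finset.sum_filter_add_sum_filter_not univ (fun i : Fin k => i.val < j) f]
  simp [pre, suf]

lemma card_pre {k j : ℕ} (hj : j ≤ k) : (pre k j).card = j := by
  induction j with
  | zero => simp [pre]
  | succ n ih => rw [pre_succ (by omega), card_insert_of_notMem (notMem_pre _), ih (by omega)]

lemma card_suf {k j : ℕ} (hj : j ≤ k) : ((suf k j).card : ℝ) = (k : ℝ) - j := by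
  have := sum_pre_suf (k := k) j (fun _ => 1)
  simp [card_pre hj] at this
  linarith

/-- Resampling the letter at position `j`. -/
lemma swap_lemma {k j : ℕ} (hj : j < k) (H : Equiv.Perm (Fin k) → Fin k → ℝ)
    (hH : ∀ τ i, i ∈ suf k j → H (τ * Equiv.swap ⟨j, hj⟩ i) = H τ) :
    ((k : ℝ) - j) * ∑ τ, H τ (τ ⟨j, hj⟩) = ∑ τ, ∑ i ∈ suf k j, H τ (τ i) := by
  rw [Finset.sum_comm, ← card_suf hj.le, ← nsmul_eq_mul, ← Finset.sum_const]
  refine Finset.sum_congr rfl fun i hi => ?_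
  refine Fintype.sum_equiv (Equiv.mulRight (Equiv.swap ⟨j, hj⟩ i)) _ _ fun τ => ?_
  simp [hH τ i hi]

lemma swap_pre {k j : ℕ} (hj : j < k) (τ : Equiv.Perm (Fin k)) {i i' : Fin k}
    (hi : i ∈ suf k j) (hi' : i' ∈ pre k j) :
    (τ * Equiv.swap ⟨j, hj⟩ i) i' = τ i' := by
  rw [mem_suf] at hi
  rw [mem_pre] at hi'
  rw [Equiv.Perm.mul_apply, Equiv.swap_apply_of_ne_of_ne]
  · intro h; simp [h] at hi'
  · intro h; subst h; omega

/-- centred cost -/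
noncomputable def cen {k : ℕ} (π : Equiv.Perm (Fin k)) (t : Fin k) : ℝ :=
  ((π t : ℕ) : ℝ) - ((k : ℝ) - 1) / 2

lemma sum_fin (k : ℕ) : ∑ i : Fin k, ((i : ℕ) : ℝ) = k * ((k : ℝ) - 1) / 2 := by
  rw [Fin.sum_univ_eq_sum_range (fun i => (i : ℝ)) k]
  induction k with
  | zero => simp
  | succ n ih => rw [Finset.sum_range_succ, ih]; push_cast; ring

lemma sum_cen {k : ℕ} (π : Equiv.Perm (Fin k)) : ∑ t, cen π t = 0 := by
  have h1 : ∑ t, ((π t : ℕ) : ℝ) = k * ((k : ℝ) - 1) / 2 := by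
    rw [Equiv.sum_comp π (fun i => ((i : ℕ) : ℝ)), sum_fin]
  simp only [cen, Finset.sum_sub_distrib, h1]
  simp; ring

lemma abs_cen {k : ℕ} (π : Equiv.Perm (Fin k)) (t : Fin k) : |cen π t| ≤ k := by
  have h : ((π t : ℕ) : ℝ) + 1 ≤ k := by exact_mod_cast (π t).2
  have h0 : (0:ℝ) ≤ ((π t : ℕ) : ℝ) := Nat.cast_nonneg _
  rw [cen, abs_le]; constructor <;> linarith

/-- centred partial sum -/
noncomputable def X {k : ℕ} (π : Equiv.Perm (Fin k)) (j : ℕ) (τ : Equiv.Perm (Fin k)) : ℝ :=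
  ∑ i ∈ pre k j, cen π (τ i)

lemma sum_suf_cen {k : ℕ} (π : Equiv.Perm (Fin k)) (j : ℕ) (τ : Equiv.Perm (Fin k)) :
    ∑ i ∈ suf k j, cen π (τ i) = - X π j τ := by
  have := sum_pre_suf j (fun i => cen π (τ i))
  rw [Equiv.sum_comp τ (cen π), sum_cen] at this
  rw [X]; linarith

lemma exp_quad {x : ℝ} (h : |x| ≤ 1) : Real.exp x ≤ 1 + x + x ^ 2 := by
  have := (abs_le.1 (Real.abs_exp_sub_one_sub_id_le h)).2
  linarith

lemma exp_drift (y m : ℝ) (hm : 1 ≤ m) : Real.exp y * (1 - y / m) ≤ Real.exp y + 1 := by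
  have he := Real.exp_pos y
  rcases le_or_gt 0 y with h | h
  · have : 0 ≤ y / m := by positivity
    nlinarith
  · have h1 : 1 - y / m ≤ 1 - y := by
      have : y ≤ y / m := by rw [le_div_iff₀ (by linarith)]; nlinarith
      linarith
    have h2 : 1 - y ≤ Real.exp (-y) := by have := Real.add_one_le_exp (-y); linarith
    have h3 : Real.exp y * Real.exp (-y) = 1 := by rw [← Real.exp_add]; simp
    have := mul_le_mul_of_nonneg_left (h1.trans h2) he.le
    linarith

lemma X_step {k j : ℕ} (hj : j < k) (π : Equiv.Perm (Fin k)) (δ : ℝ) (h0 : 0 ≤ δ) (h1 : δ ≤ 1) :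
    ∑ τ, Real.exp (δ / k * X π (j+1) τ) ≤
      (1 + δ^2) * ∑ τ, Real.exp (δ / k * X π j τ) + (k.factorial : ℝ) := by
  have hk : (0:ℝ) < k := by exact_mod_cast (by omega : 0 < k)
  have hm : (1:ℝ) ≤ (k:ℝ) - j := by
    have : ((j+1 : ℕ):ℝ) ≤ k := by exact_mod_cast hj
    push_cast at this; linarith
  set l := δ / k with hl
  have hla : ∀ t, |l * cen π t| ≤ δ := by
    intro t
    rw [abs_mul, hl, abs_of_nonneg (by positivity)]
    calc δ / k * |cen π t| ≤ δ / k * k := by gcongr; exact abs_cen π t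
      _ = δ := by field_simp
  have key := swap_lemma hj (fun τ t => Real.exp (l * X π j τ) * Real.exp (l * cen π t)) (by
    intro τ i hi
    have : X π j (τ * Equiv.swap ⟨j, hj⟩ i) = X π j τ := by
      refine Finset.sum_congr rfl fun i' hi' => ?_
      rw [swap_pre hj τ hi hi']
    simp only [this])
  have e1 : ∀ τ : Equiv.Perm (Fin k), Real.exp (l * X π j τ) * Real.exp (l * cen π (τ ⟨j, hj⟩))
      = Real.exp (l * X π (j+1) τ) := by
    intro τ
    rw [← Real.exp_add, X, X, pre_succ hj, Finset.sum_insert (notMem_pre hj)]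
    congr 1; ring
  simp only [e1] at key
  have e2 : ∀ τ : Equiv.Perm (Fin k),
      ∑ i ∈ suf k j, Real.exp (l * X π j τ) * Real.exp (l * cen π (τ i)) ≤
      ((k:ℝ) - j) * ((1 + δ^2) * Real.exp (l * X π j τ) + 1) := by
    intro τ
    rw [← Finset.mul_sum]
    have : ∑ i ∈ suf k j, Real.exp (l * cen π (τ i)) ≤
        ((k:ℝ) - j) * (1 + δ^2) - l * X π j τ := by
      calc _ ≤ ∑ i ∈ suf k j, ((1 + δ^2) + l * cen π (τ i)) := by
            refine Finset.sum_le_sum fun i _ => ?_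
            have h2 := exp_quad ((hla (τ i)).trans h1)
            have h3 : (l * cen π (τ i))^2 ≤ δ^2 := by
              rw [← sq_abs]; gcongr; exact hla _
            linarith
        _ = _ := by
            rw [Finset.sum_add_distrib, ← Finset.mul_sum, sum_suf_cen, Finset.sum_const,
              nsmul_eq_mul, card_suf hj.le]; ring
    have h4 := mul_le_mul_of_nonneg_left this (Real.exp_pos (l * X π j τ)).le
    have h5 := exp_drift (l * X π j τ) _ hm
    have h6 : Real.exp (l * X π j τ) * (((k:ℝ) - j) * (1 + δ^2) - l * X π j τ) =
      ((k:ℝ) - j) * (Real.exp (l * X π j τ) * (1 - l * X π j τ / ((k:ℝ) - j)) +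
        δ^2 * Real.exp (l * X π j τ)) := by
      field_simp; ring
    refine h4.trans (h6.le.trans ?_)
    refine mul_le_mul_of_nonneg_left ?_ (by linarith)
    linarith
  have e3 := Finset.sum_le_sum (fun τ (_ : τ ∈ (univ : Finset (Equiv.Perm (Fin k)))) => e2 τ)
  rw [← key, ← Finset.mul_sum, Finset.sum_add_distrib, ← Finset.mul_sum] at e3
  have := le_of_mul_le_mul_left e3 (by linarith)
  simpa [Fintype.card_perm] using this

lemma X_mgf {k : ℕ} (π : Equiv.Perm (Fin k)) (δ : ℝ) (h0 : 0 ≤ δ) (h1 : δ ≤ 1) (j : ℕ)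
    (hj : j ≤ k) :
    ∑ τ, Real.exp (δ / k * X π j τ) ≤ (j + 1) * Real.exp (δ^2 * j) * (k.factorial : ℝ) := by
  induction j with
  | zero => simp [X, pre, Fintype.card_perm]
  | succ n ih =>
    refine (X_step hj π δ h0 h1).trans ?_
    have ih := ih (by omega)
    have h2 : 1 + δ^2 ≤ Real.exp (δ^2) := by have := Real.add_one_le_exp (δ^2); linarith
    have h3 : Real.exp (δ^2 * ((n+1 : ℕ) : ℝ)) = Real.exp (δ^2) * Real.exp (δ^2 * n) := by
      rw [← Real.exp_add]; push_cast; ring_nf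
    have hf : (0:ℝ) ≤ k.factorial := by positivity
    have h4 : (1 + δ^2) * ∑ τ, Real.exp (δ / k * X π n τ) ≤
      Real.exp (δ^2) * ((n + 1) * Real.exp (δ^2 * n) * (k.factorial : ℝ)) := by
      gcongr
    have h5 : 1 ≤ Real.exp (δ^2 * ((n+1 : ℕ) : ℝ)) := Real.one_le_exp (by positivity)
    have h6 := mul_le_mul_of_nonneg_right h5 hf
    rw [h3] at h6 ⊢
    push_cast
    nlinarith

lemma X_tail {k : ℕ} (hk : 0 < k) (π : Equiv.Perm (Fin k)) (η : ℝ) (h0 : 0 ≤ η) (h1 : η ≤ 1)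
    (j : ℕ) (hj : j ≤ k) :
    ((univ.filter (fun τ => η * (k:ℝ)^2 ≤ X π j τ)).card : ℝ) ≤
      (k + 1) * Real.exp (-(η^2/4) * k) * (k.factorial : ℝ) := by
  have hk : (0:ℝ) < k := by exact_mod_cast hk
  have hm := X_mgf π (η/2) (by linarith) (by linarith) j hj
  have hjk : (j:ℝ) ≤ k := by exact_mod_cast hj
  have h2 : ((univ.filter (fun τ => η * (k:ℝ)^2 ≤ X π j τ)).card : ℝ) * Real.exp (η^2/2 * k) ≤
      ∑ τ, Real.exp (η/2 / k * X π j τ) := by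
    rw [← nsmul_eq_mul, ← Finset.sum_const]
    refine le_trans (Finset.sum_le_sum fun τ hτ => ?_)
      (Finset.sum_le_sum_of_subset_of_nonneg (Finset.filter_subset _ _)
        (fun _ _ _ => (Real.exp_pos _).le))
    rw [Finset.mem_filter] at hτ
    apply Real.exp_le_exp.2
    calc η^2/2 * k = η/2/k * (η * (k:ℝ)^2) := by field_simp
      _ ≤ _ := by gcongr; exact hτ.2
  have h3 : ((j:ℝ) + 1) * Real.exp ((η/2)^2 * j) * (k.factorial : ℝ) ≤
      (k + 1) * Real.exp ((η/2)^2 * k) * (k.factorial : ℝ) := by gcongr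
  have h4 : Real.exp ((η/2)^2 * k) = Real.exp (-(η^2/4) * k) * Real.exp (η^2/2 * k) := by
    rw [← Real.exp_add]; ring_nf
  rw [h4] at h3
  refine le_of_mul_le_mul_right ?_ (Real.exp_pos (η^2/2 * k))
  linarith

/-- Number of earlier letters below the letter at `i`. -/
noncomputable def yc {k : ℕ} (π : Equiv.Perm (Fin k)) (j : ℕ) (τ : Equiv.Perm (Fin k))
    (t : Fin k) : ℝ := ∑ i' ∈ pre k j, if π (τ i') < π t then 1 else 0

lemma yc_nonneg {k : ℕ} (π : Equiv.Perm (Fin k)) (j : ℕ) (τ : Equiv.Perm (Fin k))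
    (t : Fin k) : 0 ≤ yc π j τ t := Finset.sum_nonneg fun _ _ => by split_ifs <;> simp

lemma yc_le {k : ℕ} (π : Equiv.Perm (Fin k)) (j : ℕ) (τ : Equiv.Perm (Fin k))
    (t : Fin k) : yc π j τ t ≤ k := by
  calc yc π j τ t ≤ ∑ i' ∈ pre k j, (1:ℝ) := Finset.sum_le_sum fun _ _ => by split_ifs <;> simp
    _ ≤ ∑ i' : Fin k, (1:ℝ) := Finset.sum_le_sum_of_subset_of_nonneg (subset_univ _) (by simp)
    _ = k := by simp

lemma pair_count {k j : ℕ} (hj : j ≤ k) (π τ : Equiv.Perm (Fin k)) :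
    ∑ i ∈ suf k j, yc π j τ (τ i) = ((k:ℝ) - j) * j / 2 - X π j τ := by
  have tot : ∀ i : Fin k, ∑ i' : Fin k, (if π (τ i') < π (τ i) then (1:ℝ) else 0) =
      ((π (τ i) : ℕ) : ℝ) := by
    intro i
    rw [Equiv.sum_comp τ (fun t => if π t < π (τ i) then (1:ℝ) else 0),
      Equiv.sum_comp π (fun t => if t < π (τ i) then (1:ℝ) else 0), Finset.sum_boole]
    congr 1
    rw [show (univ.filter fun t : Fin k => t < π (τ i)) = Finset.Iio (π (τ i)) by ext; simp]
    simp
  have hC : 2 * ∑ i ∈ suf k j, ∑ i' ∈ suf k j, (if π (τ i') < π (τ i) then (1:ℝ) else 0) =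
      ((k:ℝ) - j)^2 - ((k:ℝ) - j) := by
    have h1 : ∑ i ∈ suf k j, ∑ i' ∈ suf k j, ((if π (τ i') < π (τ i) then (1:ℝ) else 0) +
        (if π (τ i) < π (τ i') then (1:ℝ) else 0) + (if i = i' then (1:ℝ) else 0)) =
        ∑ i ∈ suf k j, ∑ i' ∈ suf k j, (1:ℝ) := by
      refine Finset.sum_congr rfl fun i _ => Finset.sum_congr rfl fun i' _ => ?_
      rcases lt_trichotomy (π (τ i)) (π (τ i')) with h | h | h
      · have : i ≠ i' := by rintro rfl; exact lt_irrefl _ h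
        simp [h, this, h.le]
      · have : i = i' := τ.injective (π.injective h)
        simp [this]
      · have : i ≠ i' := by rintro rfl; exact lt_irrefl _ h
        simp [h, this, h.le]
    simp only [Finset.sum_add_distrib] at h1
    rw [Finset.sum_comm (f := fun i i' => if π (τ i) < π (τ i') then (1:ℝ) else 0)] at h1
    have h2 : ∑ i ∈ suf k j, ∑ i' ∈ suf k j, (if i = i' then (1:ℝ) else 0) = (k:ℝ) - j := by
      rw [← card_suf hj]
      simp
    rw [h2] at h1
    simp only [Finset.sum_const, nsmul_eq_mul, card_suf hj] at h1
    linarith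
  have hs : ∑ i ∈ suf k j, ((π (τ i) : ℕ) : ℝ) = - X π j τ + ((k:ℝ)-j) * (((k:ℝ) - 1)/2) := by
    rw [← sum_suf_cen, ← card_suf hj, ← nsmul_eq_mul, ← Finset.sum_const, ← Finset.sum_add_distrib]
    refine Finset.sum_congr rfl fun i _ => ?_
    rw [cen]; ring
  have hy : ∀ i, yc π j τ (τ i) = ((π (τ i) : ℕ) : ℝ) -
      ∑ i' ∈ suf k j, (if π (τ i') < π (τ i) then (1:ℝ) else 0) := by
    intro i
    rw [← tot i, ← sum_pre_suf j, yc]; ring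
  simp only [hy, Finset.sum_sub_distrib, hs]
  linear_combination (-1/2) * hC

end FewPerm
namespace FewPerm
open Finset

/-- `P j τ` only depends on the first `j` letters of `τ`. -/
def Adapted {k : ℕ} (P : ℕ → Equiv.Perm (Fin k) → Equiv.Perm (Fin k)) : Prop :=
  ∀ j τ τ', (∀ i ∈ pre k j, τ i = τ' i) → P j τ = P j τ'

/-- One step of the exponential supermartingale. -/
noncomputable def stepW {k : ℕ} (P : ℕ → Equiv.Perm (Fin k) → Equiv.Perm (Fin k)) (η θ δ : ℝ)
    (j : ℕ) (τ : Equiv.Perm (Fin k)) (t : Fin k) : ℝ :=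
  open Classical in
  if X (P j τ) j τ < η * (k:ℝ)^2 then
    Real.exp (-(δ / k) * (yc (P j τ) j τ t - (j / 2 - θ * k))) else 0

noncomputable def MM {k : ℕ} (P : ℕ → Equiv.Perm (Fin k) → Equiv.Perm (Fin k)) (η θ δ : ℝ)
    (j : ℕ) (τ : Equiv.Perm (Fin k)) : ℝ :=
  ∏ i ∈ pre k j, stepW P η θ δ i τ (τ i)

lemma stepW_nonneg {k : ℕ} (P : ℕ → Equiv.Perm (Fin k) → Equiv.Perm (Fin k)) (η θ δ : ℝ)
    (j : ℕ) (τ : Equiv.Perm (Fin k)) (t : Fin k) : 0 ≤ stepW P η θ δ j τ t := by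
  unfold stepW; split_ifs
  · exact (Real.exp_pos _).le
  · exact le_rfl

lemma stepW_congr {k : ℕ} {P : ℕ → Equiv.Perm (Fin k) → Equiv.Perm (Fin k)} (hP : Adapted P)
    (η θ δ : ℝ) (j : ℕ) (τ τ' : Equiv.Perm (Fin k)) (h : ∀ i ∈ pre k j, τ i = τ' i) (t : Fin k) :
    stepW P η θ δ j τ t = stepW P η θ δ j τ' t := by
  have h1 := hP j τ τ' h
  have h2 : X (P j τ) j τ = X (P j τ') j τ' := by
    rw [h1]; exact Finset.sum_congr rfl fun i hi => by rw [h i hi]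
  have h3 : yc (P j τ) j τ t = yc (P j τ') j τ' t := by
    rw [h1]; exact Finset.sum_congr rfl fun i hi => by rw [h i hi]
  simp only [stepW, h2, h3]

lemma MM_step {k j : ℕ} (hj : j < k) {P : ℕ → Equiv.Perm (Fin k) → Equiv.Perm (Fin k)}
    (hP : Adapted P) (η θ δ : ℝ) (h0 : 0 ≤ δ) (h1 : δ ≤ 1)
    (hη : η * k ≤ θ * ((k:ℝ) - j)) :
    ∑ τ, MM P η θ δ (j+1) τ ≤ Real.exp (δ^2) * ∑ τ, MM P η θ δ j τ := by
  have hk : (0:ℝ) < k := by exact_mod_cast (by omega : 0 < k)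
  have hm : (1:ℝ) ≤ (k:ℝ) - j := by
    have : ((j+1 : ℕ):ℝ) ≤ k := by exact_mod_cast hj
    push_cast at this; linarith
  have key := swap_lemma hj (fun τ t => MM P η θ δ j τ * stepW P η θ δ j τ t) (by
    intro τ i hi
    have hag : ∀ i' ∈ pre k j, (τ * Equiv.swap ⟨j, hj⟩ i) i' = τ i' :=
      fun i' hi' => swap_pre hj τ hi hi'
    have : MM P η θ δ j (τ * Equiv.swap ⟨j, hj⟩ i) = MM P η θ δ j τ := by
      refine Finset.prod_congr rfl fun i' hi' => ?_
      rw [hag i' hi']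
      refine stepW_congr hP _ _ _ _ _ _ (fun i'' hi'' => hag _ ?_) _
      rw [mem_pre] at *; omega
    funext t
    rw [this, stepW_congr hP η θ δ j _ _ hag t])
  have e1 : ∀ τ : Equiv.Perm (Fin k), MM P η θ δ j τ * stepW P η θ δ j τ (τ ⟨j, hj⟩)
      = MM P η θ δ (j+1) τ := by
    intro τ
    rw [MM, MM, pre_succ hj, Finset.prod_insert (notMem_pre hj), mul_comm]
  simp only [e1] at key
  have e2 : ∀ τ : Equiv.Perm (Fin k),
      ∑ i ∈ suf k j, MM P η θ δ j τ * stepW P η θ δ j τ (τ i) ≤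
      ((k:ℝ) - j) * (Real.exp (δ^2) * MM P η θ δ j τ) := by
    intro τ
    rw [← Finset.mul_sum]
    have hM : 0 ≤ MM P η θ δ j τ := Finset.prod_nonneg fun _ _ => stepW_nonneg _ _ _ _ _ _ _
    have : ∑ i ∈ suf k j, stepW P η θ δ j τ (τ i) ≤ ((k:ℝ) - j) * Real.exp (δ^2) := by
      by_cases hg : X (P j τ) j τ < η * (k:ℝ)^2
      · simp only [stepW, if_pos hg]
        set l := δ / k with hl
        have hl0 : 0 ≤ l := by positivity
        set μ : ℝ := j / 2 - θ * k with hμ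
        have hs : ∑ i ∈ suf k j, Real.exp (-l * yc (P j τ) j τ (τ i)) ≤
            ((k:ℝ) - j) * Real.exp (δ^2 - l * μ) := by
          have hpc := pair_count hj.le (P j τ) τ
          calc _ ≤ ∑ i ∈ suf k j, ((1 + δ^2) - l * yc (P j τ) j τ (τ i)) := by
                refine Finset.sum_le_sum fun i _ => ?_
                have hb : l * yc (P j τ) j τ (τ i) ≤ δ := by
                  calc _ ≤ δ / k * k := by rw [hl]; gcongr; exact yc_le _ _ _ _
                    _ = δ := by field_simp
                have hb0 : 0 ≤ l * yc (P j τ) j τ (τ i) := mul_nonneg hl0 (yc_nonneg _ _ _ _)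
                have h2 := exp_quad (x := -l * yc (P j τ) j τ (τ i))
                  (by rw [abs_le]; constructor <;> linarith)
                have h3 : (-l * yc (P j τ) j τ (τ i))^2 ≤ δ^2 := by
                  rw [neg_mul, neg_sq]; gcongr
                linarith
            _ = ((k:ℝ) - j) * (1 + δ^2) - l * (((k:ℝ) - j) * j / 2 - X (P j τ) j τ) := by
                rw [Finset.sum_sub_distrib, ← Finset.mul_sum, hpc, Finset.sum_const,
                  nsmul_eq_mul, card_suf hj.le]
            _ ≤ ((k:ℝ) - j) * (1 + δ^2 - l * μ) := by
                have : X (P j τ) j τ ≤ ((k:ℝ) - j) * (θ * k) := by nlinarith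
                have := mul_le_mul_of_nonneg_left this hl0
                rw [hμ]; nlinarith
            _ ≤ _ := by
                refine mul_le_mul_of_nonneg_left ?_ (by linarith)
                have := Real.add_one_le_exp (δ^2 - l * μ); linarith
        have h5 : ∀ i, Real.exp (-l * (yc (P j τ) j τ (τ i) - μ)) =
            Real.exp (-l * yc (P j τ) j τ (τ i)) * Real.exp (l * μ) := by
          intro i; rw [← Real.exp_add]; ring_nf
        simp only [h5]
        rw [← Finset.sum_mul]
        have h6 := mul_le_mul_of_nonneg_right hs (Real.exp_pos (l * μ)).le
        rw [mul_assoc, ← Real.exp_add] at h6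
        simpa using h6
      · simp only [stepW, if_neg hg]
        simp only [Finset.sum_const_zero]
        exact mul_nonneg (by linarith) (Real.exp_pos _).le
    have := mul_le_mul_of_nonneg_left this hM
    linarith
  have e3 := Finset.sum_le_sum (fun τ (_ : τ ∈ (univ : Finset (Equiv.Perm (Fin k)))) => e2 τ)
  rw [← key, ← Finset.mul_sum, ← Finset.mul_sum] at e3
  exact le_of_mul_le_mul_left e3 (by linarith)

lemma MM_mgf {k : ℕ} {P : ℕ → Equiv.Perm (Fin k) → Equiv.Perm (Fin k)}
    (hP : Adapted P) (η θ δ : ℝ) (h0 : 0 ≤ δ) (h1 : δ ≤ 1) (hθ : 0 ≤ θ) (j : ℕ) (hj : j ≤ k)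
    (hη : η * k ≤ θ * ((k:ℝ) - j)) :
    ∑ τ, MM P η θ δ j τ ≤ Real.exp (δ^2 * j) * (k.factorial : ℝ) := by
  induction j with
  | zero => simp [MM, pre, Fintype.card_perm]
  | succ n ih =>
    have hη' : η * k ≤ θ * ((k:ℝ) - n) := by push_cast at hη; nlinarith
    refine (MM_step hj hP η θ δ h0 h1 hη').trans ?_
    have h3 : Real.exp (δ^2 * ((n+1 : ℕ) : ℝ)) = Real.exp (δ^2) * Real.exp (δ^2 * n) := by
      rw [← Real.exp_add]; push_cast; ring_nf
    rw [h3, mul_assoc]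
    exact mul_le_mul_of_nonneg_left (ih (by omega) hη') (Real.exp_pos _).le

lemma sum_mu {k : ℕ} (θ : ℝ) (J : ℕ) (hJ : J ≤ k) :
    ∑ i ∈ pre k J, (((i : ℕ) : ℝ) / 2 - θ * k) = J * ((J:ℝ) - 1) / 4 - θ * k * J := by
  induction J with
  | zero => simp [pre]
  | succ n ih =>
    rw [pre_succ hJ, Finset.sum_insert (notMem_pre _), ih (by omega)]; push_cast; ring

lemma main_tail {k : ℕ} (hk : 0 < k) {P : ℕ → Equiv.Perm (Fin k) → Equiv.Perm (Fin k)}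
    (hP : Adapted P) (η θ ξ : ℝ) (h0 : 0 ≤ ξ) (h1 : ξ ≤ 1) (hθ : 0 ≤ θ) (J : ℕ) (hJ : J ≤ k)
    (hη : η * k ≤ θ * ((k:ℝ) - J)) :
    ((univ.filter (fun τ => (∀ j ∈ pre k J, X (P j τ) j τ < η * (k:ℝ)^2) ∧
      ∑ i ∈ pre k J, yc (P i τ) i τ (τ i) ≤ J * ((J:ℝ) - 1) / 4 - θ * k * J - ξ * (k:ℝ)^2)).card
        : ℝ) ≤ Real.exp (-(ξ^2/4) * k) * (k.factorial : ℝ) := by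
  have hk : (0:ℝ) < k := by exact_mod_cast hk
  have hm := MM_mgf hP η θ (ξ/2) (by linarith) (by linarith) hθ J hJ hη
  have hjk : (J:ℝ) ≤ k := by exact_mod_cast hJ
  refine le_of_mul_le_mul_right ?_ (Real.exp_pos (ξ^2/2 * k))
  have h4 : Real.exp ((ξ/2)^2 * k) = Real.exp (-(ξ^2/4) * k) * Real.exp (ξ^2/2 * k) := by
    rw [← Real.exp_add]; ring_nf
  have h3 : Real.exp ((ξ/2)^2 * J) * (k.factorial : ℝ) ≤
      Real.exp ((ξ/2)^2 * k) * (k.factorial : ℝ) := by gcongr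
  rw [h4] at h3
  have h5 : ∀ a b c : ℝ, a * b * c = a * c * b := fun a b c => by ring
  rw [h5 (Real.exp _)]
  refine le_trans ?_ (hm.trans h3)
  rw [← nsmul_eq_mul, ← Finset.sum_const]
  refine le_trans (Finset.sum_le_sum fun τ hτ => ?_)
    (Finset.sum_le_sum_of_subset_of_nonneg (Finset.filter_subset _ _)
      (fun _ _ _ => Finset.prod_nonneg fun _ _ => stepW_nonneg _ _ _ _ _ _ _))
  rw [Finset.mem_filter] at hτ
  obtain ⟨-, hg, hy⟩ := hτ
  have : MM P η θ (ξ/2) J τ = Real.exp (-(ξ/2 / k) *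
      ∑ i ∈ pre k J, (yc (P i τ) i τ (τ i) - (((i : ℕ) : ℝ) / 2 - θ * k))) := by
    rw [Finset.mul_sum, Real.exp_sum]
    refine Finset.prod_congr rfl fun i hi => ?_
    rw [stepW, if_pos (hg i hi)]
  rw [this, Finset.sum_sub_distrib, sum_mu θ J hJ]
  apply Real.exp_le_exp.2
  calc ξ^2/2 * k = -(ξ/2/k) * (-(ξ * (k:ℝ)^2)) := by field_simp
    _ ≤ _ := by
      apply mul_le_mul_of_nonpos_left
      · linarith
      · have : 0 ≤ ξ/2/k := by positivity
        linarith

end FewPerm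

open FewPerm in
lemma walk_adapted {k : ℕ} {V : Type} (D : WDFA k V) (j : ℕ) (τ τ' : Equiv.Perm (Fin k))
    (h : ∀ i ∈ pre k j, τ i = τ' i) :
    D.walkEnd D.root ((permWord τ).take j) = D.walkEnd D.root ((permWord τ').take j) := by
  congr 1
  apply List.ext_getElem
  · simp [permWord]
  · intro n h1 h2
    simp [permWord] at h1 ⊢
    apply h
    rw [mem_pre]; simp; omega

open FewPerm in
lemma Yval_eq {k : ℕ} {V : Type} (D : WDFA k V) (π : V → Equiv.Perm (Fin k))
    (hπ : ∀ v t, D.cost v t = (((π v t : ℕ) + 1 : ℕ) : ℕ∞)) (τ : Equiv.Perm (Fin k)) (j : Fin k) :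
    (Yval D τ j : ℝ) = yc (π (D.walkEnd D.root ((permWord τ).take j))) j τ (τ j) := by
  rw [Yval, yc, Finset.sum_boole, Nat.card_eq_fintype_card, Fintype.card_subtype, pre,
    Finset.filter_filter]
  congr 2
  ext i
  simp only [hπ, Finset.mem_filter, Finset.mem_univ, true_and, Nat.cast_lt, Fin.lt_def]
  simp

open FewPerm in
lemma fixed_k (ε : ℝ) (hε : 0 < ε) (hε4 : ε < 1/4) (k : ℕ) (hk : 4 / ε ≤ k) (hk0 : 0 < k)
    (V : Type) [Fintype V] (hV : Fintype.card V ≤ k^2) (D : WDFA k V) (hD : D.IsKDFA) :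
    (Nat.card {τ : Equiv.Perm (Fin k) //
        ((∑ j : Fin k, Yval D τ j : ℕ) : ℝ) < (1/4 - ε) * (k : ℝ)^2} : ℝ) ≤
      Real.exp (-((ε/4)^2/4) * k) * k.factorial +
        (k:ℝ)^2 * k * ((k + 1) * Real.exp (-((ε^2/8)^2/4) * k) * k.factorial) := by
  classical
  choose π hπ using hD
  set P : ℕ → Equiv.Perm (Fin k) → Equiv.Perm (Fin k) := fun j τ =>
    π (D.walkEnd D.root ((permWord τ).take j)) with hPdef
  have hP : Adapted P := fun j τ τ' h => by simp only [hPdef, walk_adapted D j τ τ' h]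
  have hkR : (0:ℝ) < k := by exact_mod_cast hk0
  set J := ⌊(1 - ε/2) * (k:ℝ)⌋₊ with hJd
  have hJ1 : (J:ℝ) ≤ (1 - ε/2) * k := Nat.floor_le (by nlinarith)
  have hJ2 : (1 - ε/2) * k < (J:ℝ) + 1 := Nat.lt_floor_add_one _
  have hJk : (J:ℝ) ≤ k := by nlinarith
  have hJ : J ≤ k := by exact_mod_cast hJk
  have hη : ε^2/8 * k ≤ ε/4 * ((k:ℝ) - J) := by nlinarith
  have ht := main_tail hk0 hP (ε^2/8) (ε/4) (ε/4) (by linarith) (by linarith) (by linarith) J hJ hη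
  have hnum : (1/4 - ε) * (k:ℝ)^2 ≤ J * ((J:ℝ) - 1) / 4 - ε/4 * k * J - ε/4 * (k:ℝ)^2 := by
    have hek : 4 ≤ ε * k := by rw [div_le_iff₀ hε] at hk; linarith
    have hek2 : 4 * k ≤ ε * k^2 := by nlinarith
    have a1 : 0 ≤ (1 - ε/2) * k - 2 := by nlinarith
    have a2 : ((1 - ε/2) * k - 1) * ((1 - ε/2) * k - 2) ≤ J * ((J:ℝ) - 1) := by
      apply mul_le_mul <;> linarith
    have a3 : ε/4 * k * J ≤ ε/4 * k * k := by gcongr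
    nlinarith [sq_nonneg (ε * k)]
  set B1 := Finset.univ.filter (fun τ => (∀ j ∈ pre k J, X (P j τ) j τ < ε^2/8 * (k:ℝ)^2) ∧
      ∑ i ∈ pre k J, yc (P i τ) i τ (τ i) ≤
        J * ((J:ℝ) - 1) / 4 - ε/4 * k * J - ε/4 * (k:ℝ)^2) with hB1
  set B2 := Finset.univ.biUnion (fun q : V × Fin k =>
    Finset.univ.filter (fun τ => ε^2/8 * (k:ℝ)^2 ≤ X (π q.1) q.2 τ)) with hB2
  have hsub : Finset.univ.filter (fun τ : Equiv.Perm (Fin k) =>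
      ((∑ j : Fin k, Yval D τ j : ℕ) : ℝ) < (1/4 - ε) * (k : ℝ)^2) ⊆ B1 ∪ B2 := by
    intro τ hτ
    rw [Finset.mem_filter] at hτ
    rw [Finset.mem_union]
    by_cases hb : ∀ j ∈ pre k J, X (P j τ) j τ < ε^2/8 * (k:ℝ)^2
    · left
      rw [hB1, Finset.mem_filter]
      refine ⟨Finset.mem_univ _, hb, ?_⟩
      refine le_trans ?_ hnum
      refine le_trans ?_ hτ.2.le
      push_cast
      calc _ = ∑ i ∈ pre k J, (Yval D τ i : ℝ) :=
            Finset.sum_congr rfl fun i _ => (Yval_eq D π hπ τ i).symm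
        _ ≤ _ := Finset.sum_le_sum_of_subset_of_nonneg (Finset.subset_univ _)
            (fun _ _ _ => Nat.cast_nonneg _)
    · right
      push Not at hb
      obtain ⟨j, hj, hx⟩ := hb
      rw [hB2, Finset.mem_biUnion]
      exact ⟨(D.walkEnd D.root ((permWord τ).take j), j), Finset.mem_univ _, by
        simpa [hPdef] using hx⟩
  have hc2 : (B2.card : ℝ) ≤
      (k:ℝ)^2 * k * ((k + 1) * Real.exp (-((ε^2/8)^2/4) * k) * k.factorial) := by
    have h1 : (B2.card : ℝ) ≤ ∑ q : V × Fin k,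
        ((Finset.univ.filter (fun τ => ε^2/8 * (k:ℝ)^2 ≤ X (π q.1) q.2 τ)).card : ℝ) := by
      rw [← Nat.cast_sum]
      exact Nat.cast_le.2 Finset.card_biUnion_le
    refine h1.trans ((Finset.sum_le_sum fun q _ =>
      X_tail hk0 (π q.1) (ε^2/8) (by positivity) (by nlinarith) q.2 q.2.2.le).trans ?_)
    rw [Finset.sum_const, nsmul_eq_mul, Finset.card_univ, Fintype.card_prod, Fintype.card_fin]
    have : (Fintype.card V : ℝ) ≤ (k:ℝ)^2 := by exact_mod_cast hV
    push_cast
    gcongr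
  rw [Nat.card_eq_fintype_card, Fintype.card_subtype]
  have hc : ((Finset.univ.filter (fun τ : Equiv.Perm (Fin k) =>
      ((∑ j : Fin k, Yval D τ j : ℕ) : ℝ) < (1/4 - ε) * (k : ℝ)^2)).card : ℝ) ≤
      B1.card + B2.card := by
    exact_mod_cast (Finset.card_le_card hsub).trans (Finset.card_union_le _ _)
  have ht' : (B1.card : ℝ) ≤ Real.exp (-((ε/4)^2/4) * k) * k.factorial := by
    convert ht
  linarith

/-- Exponential decay beats polynomial growth. -/
lemma asymp (a b : ℝ) (ha : 0 < a) (hb : 0 < b) : ∃ c : ℝ, 0 < c ∧ ∃ K : ℕ, ∀ k : ℕ, K ≤ k →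
    Real.exp (-a * k) + (k:ℝ)^2 * k * ((k + 1) * Real.exp (-b * k)) < Real.exp (-c * k) := by
  set c := min a b / 2 with hc
  have hm : 0 < min a b := lt_min ha hb
  have hc0 : 0 < c := by positivity
  have hT : Filter.Tendsto (fun x : ℝ => x^4 * Real.exp (-c * x)) Filter.atTop (nhds 0) := by
    have := Real.tendsto_pow_mul_exp_neg_atTop_nhds_zero 4
    have h2 := (this.comp (Filter.tendsto_id.const_mul_atTop hc0)).const_mul ((c^4)⁻¹)
    simp only [mul_zero] at h2
    refine h2.congr fun x => ?_
    simp only [Function.comp, id]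
    field_simp
  have hT2 := (hT.comp tendsto_natCast_atTop_atTop).eventually (gt_mem_nhds (show (0:ℝ) < 1/4 by norm_num))
  obtain ⟨K, hK⟩ := Filter.eventually_atTop.1 hT2
  refine ⟨c, hc0, max K 1, fun k hk => ?_⟩
  have h1 : (k:ℝ)^4 * Real.exp (-c * k) < 1/4 := hK k (le_trans (le_max_left _ _) hk)
  have hk1 : (1:ℝ) ≤ k := by exact_mod_cast le_trans (le_max_right _ _) hk
  have hab : ∀ d, min a b ≤ d → Real.exp (-d * k) ≤ Real.exp (-c * k) * Real.exp (-c * k) := by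
    intro d hd
    rw [← Real.exp_add]; apply Real.exp_le_exp.2
    have : min a b = 2 * c := by rw [hc]; ring
    nlinarith
  have ea := hab a (min_le_left _ _)
  have eb := hab b (min_le_right _ _)
  set E := Real.exp (-c * k) with hE
  have hE0 : 0 < E := Real.exp_pos _
  have hk3 : (1:ℝ) ≤ (k:ℝ)^3 := one_le_pow₀ hk1
  have hk4 : (1:ℝ) ≤ (k:ℝ)^4 := one_le_pow₀ hk1
  have hk34 : (k:ℝ)^3 ≤ (k:ℝ)^4 := pow_le_pow_right₀ hk1 (by norm_num)
  calc _ ≤ E * E + (k:ℝ)^2 * k * ((k + 1) * (E * E)) := by gcongr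
    _ = (1 + (k:ℝ)^4 + (k:ℝ)^3) * E * E := by ring
    _ ≤ (3 * ((k:ℝ)^4)) * E * E := by gcongr; linarith
    _ = 3 * ((k:ℝ)^4 * E) * E := by ring
    _ < E := by nlinarith

theorem few_permutations_with_small_Y_sum (ε : ℝ) (hε : 0 < ε) :
    ∃ c : ℝ, 0 < c ∧ ∃ K : ℕ, ∀ k : ℕ, K ≤ k →
      ∀ (V : Type) [Fintype V], Fintype.card V ≤ k^2 →
        ∀ D : WDFA k V, D.IsKDFA →
          (Nat.card {τ : Equiv.Perm (Fin k) //
              ((∑ j : Fin k, Yval D τ j : ℕ) : ℝ) < (1/4 - ε) * (k : ℝ)^2} : ℝ) <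
            Real.exp (-c * k) * (Nat.factorial k) := by
  rcases lt_or_ge ε (1/4) with h4 | h4
  · obtain ⟨c, hc, K, hK⟩ := asymp ((ε/4)^2/4) ((ε^2/8)^2/4) (by positivity) (by positivity)
    refine ⟨c, hc, max K (max 1 ⌈4/ε⌉₊), fun k hk V _ hV D hD => ?_⟩
    have hk1 : K ≤ k := le_trans (le_max_left _ _) hk
    have hk2 : max 1 ⌈4/ε⌉₊ ≤ k := le_trans (le_max_right _ _) hk
    have hk3 : 4/ε ≤ k := Nat.ceil_le.1 (le_trans (le_max_right _ _) hk2)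
    have h := fixed_k ε hε h4 k hk3 (le_trans (le_max_left _ _) hk2) V hV D hD
    have hf : (0:ℝ) < k.factorial := by exact_mod_cast k.factorial_pos
    have h5 := mul_lt_mul_of_pos_right (hK k hk1) hf
    refine lt_of_le_of_lt h (lt_of_eq_of_lt ?_ h5)
    ring
  · refine ⟨1, one_pos, 0, fun k _ V _ _ D _ => ?_⟩
    have : IsEmpty {τ : Equiv.Perm (Fin k) //
        ((∑ j : Fin k, Yval D τ j : ℕ) : ℝ) < (1/4 - ε) * (k : ℝ)^2} := by
      refine ⟨fun ⟨τ, h⟩ => ?_⟩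
      have h1 : (0:ℝ) ≤ ((∑ j : Fin k, Yval D τ j : ℕ) : ℝ) := Nat.cast_nonneg _
      nlinarith [sq_nonneg (k:ℝ)]
    rw [Nat.card_of_isEmpty]
    have hf : (0:ℝ) < k.factorial := by exact_mod_cast k.factorial_pos
    simpa using mul_pos (Real.exp_pos _) hf
end

section
/- For every ε > 0 and all sufficiently large k: if n ≤ (1/2 − ε)k², then no word σ ∈ [k]^n contains every permutation τ ∈ S_k as a bi-directional circular pattern. In particular, for sufficiently large k there is no σ ∈ [k]^n with n ≤ 3k²/8 + 1/2 containing every τ ∈ S_k as a bi-directional circular pattern, refuting Gupta's conjecture. -/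
/-- A word `σ ∈ [r]^n` contains a permutation `τ ∈ S_k` as a pattern. -/
def ContainsPattern {n r k : ℕ} (σ : Fin n → Fin r) (τ : Equiv.Perm (Fin k)) : Prop :=
  ∃ i : Fin k → Fin n, StrictMono i ∧ ∀ j j' : Fin k, σ (i j) < σ (i j') ↔ τ j < τ j'

/-- The rotation of a word `w ∈ [r]^n` by `s` positions: position `j` reads
`w((j + s) mod n)`. -/
def rotateWord {n r : ℕ} (w : Fin n → Fin r) (s : ℕ) : Fin n → Fin r :=
  fun j => w ⟨((j : ℕ) + s) % n, Nat.mod_lt _ j.pos⟩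

/-- The reversal `w(n), w(n−1), …, w(1)` of a word `w ∈ [r]^n`. -/
def reverseWord {n r : ℕ} (w : Fin n → Fin r) : Fin n → Fin r :=
  fun j => w j.rev

/-- `τ` is a circular pattern of `w` if `τ` is a pattern of some rotation of `w`. -/
def IsCircularPattern {n r k : ℕ} (τ : Equiv.Perm (Fin k)) (w : Fin n → Fin r) : Prop :=
  ∃ s : ℕ, ContainsPattern (rotateWord w s) τ

/-- `τ` is a bi-directional circular pattern (BCP) of `w` if `τ` is a circular pattern
of `w` or of its reversal. -/
def IsBCP {n r k : ℕ} (τ : Equiv.Perm (Fin k)) (w : Fin n → Fin r) : Prop :=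
  IsCircularPattern τ w ∨ IsCircularPattern τ (reverseWord w)


namespace BCPaux

def Sub {α : Type*} (g : ℕ → α) (L ℓ : ℕ) (x : Fin ℓ → α) : Prop :=
  ∃ i : Fin ℓ → ℕ, StrictMono i ∧ ∀ j, i j < L ∧ g (i j) = x j

lemma sum_pow_le (q : ℝ) (hq : 0 < q) (hq1 : q ≤ 1) (m : ℕ) :
    ∀ S : Finset ℕ, S.card = m → ∑ d ∈ S, q ^ (d + 1) ≤ ∑ d ∈ Finset.range m, q ^ (d + 1) := by
  induction m with
  | zero =>
    intro S hS
    rw [Finset.card_eq_zero] at hS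
    simp [hS]
  | succ m ih =>
    intro S hS
    have hne : S.Nonempty := by
      rw [← Finset.card_pos]; omega
    have hmem := S.max'_mem hne
    have hmax : m ≤ S.max' hne := by
      have hsub : S ⊆ Finset.range (S.max' hne + 1) := by
        intro a ha
        have := S.le_max' a ha
        simp only [Finset.mem_range]; omega
      have := Finset.card_le_card hsub
      rw [Finset.card_range] at this
      omega
    rw [← Finset.sum_erase_add S _ hmem, Finset.sum_range_succ]
    refine add_le_add (ih _ ?_) ?_
    · rw [Finset.card_erase_of_mem hmem]; omega
    · exact pow_le_pow_of_le_one hq.le hq1 (by omega)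

open Classical in
lemma count (k : ℕ) (q : ℝ) (hq : 0 < q) (hq1 : q ≤ 1) (ℓ : ℕ) :
    ∀ (g : ℕ → Fin k) (L : ℕ),
      ((Finset.univ.filter (fun x : Fin ℓ → Fin k => Sub g L ℓ x)).card : ℝ) * q ^ L ≤
        (∑ d ∈ Finset.range k, q ^ (d + 1)) ^ ℓ := by
  induction ℓ with
  | zero =>
    intro g L
    rw [pow_zero]
    have h1 : ((Finset.univ.filter (fun x : Fin 0 → Fin k => Sub g L 0 x)).card : ℝ) ≤ 1 := by
      have := Finset.card_le_univ (Finset.univ.filter (fun x : Fin 0 → Fin k => Sub g L 0 x))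
      simp only [Fintype.card_unique] at this
      exact_mod_cast this
    have h2 : q ^ L ≤ 1 := pow_le_one₀ hq.le hq1
    exact mul_le_one₀ h1 (by positivity) h2
  | succ ℓ ih =>
    intro g L
    set T := ∑ d ∈ Finset.range k, q ^ (d + 1) with hT
    have hT0 : 0 ≤ T := by positivity
    let d : Fin k → ℕ := fun a => if h : ∃ j, g j = a then Nat.find h else 0
    have hd : ∀ a j, g j = a → g (d a) = a ∧ d a ≤ j := by
      intro a j h
      have h' : ∃ j, g j = a := ⟨j, h⟩
      simp only [d, dif_pos h']
      exact ⟨Nat.find_spec h', Nat.find_min' h' h⟩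
    let S : Finset (Fin k) := Finset.univ.filter (fun a => ∃ j, j < L ∧ g j = a)
    have hS : ∀ a ∈ S, g (d a) = a ∧ d a < L := by
      intro a ha
      obtain ⟨j, hj, hja⟩ := (Finset.mem_filter.mp ha).2
      have := hd a j hja
      exact ⟨this.1, by omega⟩
    let F : Fin k → Finset (Fin ℓ → Fin k) := fun a =>
      Finset.univ.filter (fun y => Sub (fun j => g (d a + 1 + j)) (L - (d a + 1)) ℓ y)
    have hsub : (Finset.univ.filter (fun x : Fin (ℓ + 1) → Fin k => Sub g L (ℓ + 1) x)) ⊆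
        S.biUnion (fun a => (F a).image (fun y => (Fin.cons a y : Fin (ℓ + 1) → Fin k))) := by
      intro x hx
      obtain ⟨i, hi, hix⟩ := (Finset.mem_filter.mp hx).2
      have h0 := hd (x 0) (i 0) (hix 0).2
      simp only [Finset.mem_biUnion, Finset.mem_image]
      refine ⟨x 0, ?_, Fin.tail x, ?_, Fin.cons_self_tail x⟩
      · simp only [S, Finset.mem_filter, Finset.mem_univ, true_and]
        exact ⟨i 0, hix 0⟩
      · simp only [F, Finset.mem_filter, Finset.mem_univ, true_and]
        have hlt : ∀ j : Fin ℓ, d (x 0) + 1 ≤ i j.succ := by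
          intro j
          have := hi (Fin.succ_pos j)
          omega
        refine ⟨fun j => i j.succ - (d (x 0) + 1), ?_, ?_⟩
        · intro a b hab
          have := hi (Fin.succ_lt_succ_iff.mpr hab)
          have := hlt a
          have := hlt b
          show i a.succ - (d (x 0) + 1) < i b.succ - (d (x 0) + 1)
          omega
        · intro j
          have h1 := hlt j
          have h2 := hix j.succ
          refine ⟨by show i j.succ - (d (x 0) + 1) < _; omega, ?_⟩
          show g (d (x 0) + 1 + (i j.succ - (d (x 0) + 1))) = x j.succ
          rw [Nat.add_sub_cancel' h1]
          exact h2.2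
    have hcard : ((Finset.univ.filter (fun x : Fin (ℓ + 1) → Fin k => Sub g L (ℓ + 1) x)).card : ℝ)
        ≤ ∑ a ∈ S, ((F a).card : ℝ) := by
      have h1 := (Finset.card_le_card hsub).trans Finset.card_biUnion_le
      have h2 := h1.trans (Finset.sum_le_sum (fun a _ => Finset.card_image_le))
      exact_mod_cast h2
    calc _ ≤ (∑ a ∈ S, ((F a).card : ℝ)) * q ^ L :=
          mul_le_mul_of_nonneg_right hcard (by positivity)
      _ = ∑ a ∈ S, (((F a).card : ℝ) * q ^ (L - (d a + 1))) * q ^ (d a + 1) := by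
          rw [Finset.sum_mul]
          refine Finset.sum_congr rfl (fun a ha => ?_)
          have := (hS a ha).2
          rw [mul_assoc, ← pow_add, Nat.sub_add_cancel (by omega)]
      _ ≤ ∑ a ∈ S, T ^ ℓ * q ^ (d a + 1) := by
          refine Finset.sum_le_sum (fun a _ => ?_)
          exact mul_le_mul_of_nonneg_right (ih _ _) (by positivity)
      _ = T ^ ℓ * ∑ m ∈ S.image d, q ^ (m + 1) := by
          rw [← Finset.mul_sum, Finset.sum_image]
          intro a ha b hb hab
          rw [← (hS a ha).1, ← (hS b hb).1, hab]
      _ ≤ T ^ ℓ * T := by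
          refine mul_le_mul_of_nonneg_left ?_ (by positivity)
          refine (sum_pow_le q hq hq1 _ _ rfl).trans ?_
          refine Finset.sum_le_sum_of_subset_of_nonneg ?_ (fun _ _ _ => by positivity)
          refine Finset.range_subset_range.mpr ?_
          exact Finset.card_image_le.trans ((Finset.card_le_univ S).trans (by simp))
      _ = T ^ (ℓ + 1) := (pow_succ T ℓ).symm

/-- Number of words of length `ℓ` in a window of length `L`. -/
lemma geom_bound (k : ℕ) (hk : 0 < k) (s : ℝ) (hs : 0 ≤ s) :
    ∑ d ∈ Finset.range k, Real.exp (-(s / k)) ^ (d + 1) ≤ k * Real.exp (-s / 2 + s ^ 2 / 2) := by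
  have hk' : (0 : ℝ) < k := by exact_mod_cast hk
  have hq : ∀ x : ℝ, 0 ≤ x → Real.exp (-x) ≤ 1 - x + x ^ 2 / 2 := by
    intro x hx
    have h := Real.quadratic_le_exp_of_nonneg hx
    rw [Real.exp_neg, inv_le_comm₀ (Real.exp_pos x) (by nlinarith [sq_nonneg (x - 1)])]
    refine le_trans ?_ h
    rw [inv_le_iff_one_le_mul₀ (by nlinarith [sq_nonneg (x - 1)])]
    nlinarith [sq_nonneg (x ^ 2)]
  have hterm : ∀ d ∈ Finset.range k, Real.exp (-(s / k)) ^ (d + 1) ≤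
      1 - s / k * ((d : ℝ) + 1) + s ^ 2 / 2 := by
    intro d hd
    have hdk : (d : ℝ) + 1 ≤ k := by
      have := Finset.mem_range.mp hd
      exact_mod_cast this
    rw [← Real.exp_nat_mul]
    have h1 := hq (s / k * ((d : ℝ) + 1)) (by positivity)
    have h2 : s / k * ((d : ℝ) + 1) ≤ s := by
      rw [div_mul_eq_mul_div, div_le_iff₀ hk']
      exact mul_le_mul_of_nonneg_left hdk hs
    have h3 : (s / k * ((d : ℝ) + 1)) ^ 2 ≤ s ^ 2 := pow_le_pow_left₀ (by positivity) h2 2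
    have h4 : (((d + 1 : ℕ) : ℝ)) * -(s / k) = -(s / k * ((d : ℝ) + 1)) := by push_cast; ring
    rw [h4]
    linarith
  have hsum : ∀ m : ℕ, ∑ d ∈ Finset.range m, (1 - s / k * ((d : ℝ) + 1) + s ^ 2 / 2) =
      m - s / k * (m * (m + 1) / 2) + m * (s ^ 2 / 2) := by
    intro m
    induction m with
    | zero => simp
    | succ m ih => rw [Finset.sum_range_succ, ih]; push_cast; ring
  refine (Finset.sum_le_sum hterm).trans ?_
  rw [hsum k]
  have h5 : s / k * (k * ((k : ℝ) + 1) / 2) = s * (k + 1) / 2 := by field_simp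
  rw [h5]
  have h6 := Real.add_one_le_exp (-s / 2 + s ^ 2 / 2)
  nlinarith [mul_le_mul_of_nonneg_left h6 hk'.le]

open Classical in
lemma count' (k ℓ L : ℕ) (hk : 0 < k) (ε : ℝ) (hε : 0 < ε)
    (hL : (L : ℝ) ≤ (1 / 2 - ε / 2) * k * ℓ) (g : ℕ → Fin k) :
    ((Finset.univ.filter (fun x : Fin ℓ → Fin k => Sub g L ℓ x)).card : ℝ) ≤
      (k : ℝ) ^ ℓ * Real.exp (-(ε ^ 2 / 8) * ℓ) := by
  have hk' : (0 : ℝ) < k := by exact_mod_cast hk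
  have h1 := count k (Real.exp (-(ε / 2 / k))) (Real.exp_pos _)
    (Real.exp_le_one_iff.mpr (by have : 0 < ε / 2 / k := by positivity
                                 linarith)) ℓ g L
  have h2 := geom_bound k hk (ε / 2) (by positivity)
  have h3 := h1.trans (pow_le_pow_left₀ (by positivity) h2 ℓ)
  rw [← Real.exp_nat_mul, mul_pow, ← Real.exp_nat_mul] at h3
  have h4 : ((Finset.univ.filter (fun x : Fin ℓ → Fin k => Sub g L ℓ x)).card : ℝ) ≤
      (k : ℝ) ^ ℓ * Real.exp (ℓ * (-(ε / 2) / 2 + (ε / 2) ^ 2 / 2)) * Real.exp (L * (ε / 2 / k)) := by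
    have h5 : Real.exp ((L : ℝ) * -(ε / 2 / k)) * Real.exp (L * (ε / 2 / k)) = 1 := by
      rw [← Real.exp_add]; simp
    have h6 := mul_le_mul_of_nonneg_right h3 (Real.exp_pos (L * (ε / 2 / k))).le
    rwa [mul_assoc, h5, mul_one] at h6
  refine h4.trans ?_
  rw [mul_assoc, ← Real.exp_add]
  refine mul_le_mul_of_nonneg_left (Real.exp_le_exp.mpr ?_) (by positivity)
  have h7 : (L : ℝ) * (ε / 2 / k) ≤ (1 / 2 - ε / 2) * ℓ * (ε / 2) := by
    have := mul_le_mul_of_nonneg_right hL (show 0 ≤ ε / 2 / k by positivity)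
    refine this.trans (le_of_eq ?_)
    field_simp
  nlinarith

end BCPaux

namespace BCPaux

open Classical in
/-- Few permutations have their restriction along `e` in a small set `B`. -/
lemma perm_count (k ℓ : ℕ) (e : Fin ℓ ↪ Fin k) (B : Finset (Fin ℓ → Fin k)) :
    (Finset.univ.filter (fun τ : Equiv.Perm (Fin k) => (fun j => τ (e j)) ∈ B)).card *
      k.descFactorial ℓ ≤ B.card * Fintype.card (Equiv.Perm (Fin k)) := by
  let F : (Fin ℓ → Fin k) → Finset (Equiv.Perm (Fin k)) := fun g =>
    Finset.univ.filter (fun τ => (fun j => τ (e j)) = g)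
  set c := (F e).card with hc
  have hinj : ∀ g : Fin ℓ → Fin k, Function.Injective g → (F g).card = c := by
    intro g hg
    obtain ⟨π, hπ⟩ := Equiv.Perm.exists_extending_pair e g e.injective hg
    have hπ' : ∀ j, π (e j) = g j := hπ
    symm
    refine Finset.card_bij (fun τ _ => π * τ) ?_ ?_ ?_
    · intro τ hτ
      have h := (Finset.mem_filter.mp hτ).2
      refine Finset.mem_filter.mpr ⟨Finset.mem_univ _, ?_⟩
      funext j
      have : τ (e j) = _ := congrFun h j
      rw [Equiv.Perm.mul_apply, this, hπ']
    · intro a _ b _ hab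
      exact mul_left_cancel hab
    · intro τ hτ
      have h := (Finset.mem_filter.mp hτ).2
      refine ⟨π⁻¹ * τ, Finset.mem_filter.mpr ⟨Finset.mem_univ _, ?_⟩, by simp⟩
      funext j
      have : τ (e j) = _ := congrFun h j
      rw [Equiv.Perm.mul_apply, this, ← hπ']
      simp
  have hle : ∀ g : Fin ℓ → Fin k, (F g).card ≤ c := by
    intro g
    by_cases hg : Function.Injective g
    · exact (hinj g hg).le
    · have : F g = ∅ := by
        refine Finset.filter_eq_empty_iff.mpr ?_
        intro τ _ h
        exact hg (h ▸ τ.injective.comp e.injective)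
      rw [this]; simp
  have hB : (Finset.univ.filter (fun τ : Equiv.Perm (Fin k) => (fun j => τ (e j)) ∈ B)).card
      ≤ B.card * c := by
    have hsub : (Finset.univ.filter (fun τ : Equiv.Perm (Fin k) => (fun j => τ (e j)) ∈ B)) ⊆
        B.biUnion F := by
      intro τ hτ
      exact Finset.mem_biUnion.mpr ⟨_, (Finset.mem_filter.mp hτ).2,
        Finset.mem_filter.mpr ⟨Finset.mem_univ _, rfl⟩⟩
    refine (Finset.card_le_card hsub).trans (Finset.card_biUnion_le.trans ?_)
    exact (Finset.sum_le_card_nsmul _ _ c (fun g _ => hle g)).trans (by simp)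
  have hall : k.descFactorial ℓ * c ≤ Fintype.card (Equiv.Perm (Fin k)) := by
    have h1 : ∑ g : Fin ℓ ↪ Fin k, (F g).card = k.descFactorial ℓ * c := by
      rw [Finset.sum_congr rfl (fun (g : Fin ℓ ↪ Fin k) _ => hinj g g.injective)]
      simp [Fintype.card_embedding_eq]
    rw [← h1, ← Finset.card_biUnion]
    · exact Finset.card_le_univ _
    · intro g _ g' _ hne
      rw [Function.onFun, Finset.disjoint_left]
      intro τ h h'
      apply hne
      have e1 := (Finset.mem_filter.mp h).2
      have e2 := (Finset.mem_filter.mp h').2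
      exact DFunLike.coe_injective (e1.symm.trans e2)
  calc _ ≤ B.card * c * k.descFactorial ℓ := Nat.mul_le_mul_right _ hB
    _ = B.card * (k.descFactorial ℓ * c) := by ring
    _ ≤ _ := Nat.mul_le_mul_left _ hall

/-- Over an alphabet of size `k`, a pattern of length `k` is a literal subsequence. -/
lemma pattern_eq {n k : ℕ} (σ : Fin n → Fin k) (τ : Equiv.Perm (Fin k)) (i : Fin k → Fin n)
    (h : ∀ j j' : Fin k, σ (i j) < σ (i j') ↔ τ j < τ j') (j : Fin k) : σ (i j) = τ j := by
  have hm : StrictMono (fun a : Fin k => σ (i (τ.symm a))) := by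
    intro a b hab
    show σ (i (τ.symm a)) < σ (i (τ.symm b))
    rw [h]
    simpa using hab
  have hid : ∀ a : Fin k, σ (i (τ.symm a)) = a := by
    have hb : Function.Bijective (fun a : Fin k => σ (i (τ.symm a))) :=
      Finite.injective_iff_bijective.mp hm.injective
    have := Subsingleton.elim (StrictMono.orderIsoOfSurjective _ hm hb.2) (OrderIso.refl (Fin k))
    intro a
    exact DFunLike.congr_fun this a
  simpa using hid (τ j)

/-- One of the `b` blocks of an embedding spans few positions. -/
lemma short_block (k ℓ b n : ℕ) (hℓ : 0 < ℓ) (hb : 0 < b) (hbk : b * ℓ ≤ k) (i : ℕ → ℕ)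
    (hi : ∀ x y, x < y → y < k → i x < i y) (hin : ∀ x, x < k → i x < n) :
    ∃ t, t < b ∧ i (t * ℓ + (ℓ - 1)) < i (t * ℓ) + n / b := by
  by_contra! hcon
  have key : ∀ t, t < b → (t + 1) * (n / b + 1) ≤ i (t * ℓ + (ℓ - 1)) + 1 := by
    intro t
    induction t with
    | zero =>
      intro h0
      have := hcon 0 h0
      simp only [zero_mul, zero_add, one_mul] at *
      omega
    | succ t ih =>
      intro ht
      have h1 := ih (by omega)
      have h2 := hcon (t + 1) ht
      have h3 : (t + 1 + 1) * ℓ ≤ k := (Nat.mul_le_mul_right ℓ (by omega)).trans hbk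
      have h4 : i (t * ℓ + (ℓ - 1)) < i ((t + 1) * ℓ) := by
        apply hi
        · rw [Nat.add_mul]; omega
        · rw [Nat.add_mul] at h3; omega
      rw [Nat.add_mul (t + 1) 1]
      omega
  have h1 := key (b - 1) (by omega)
  rw [Nat.sub_add_cancel hb] at h1
  have h2 : (b - 1) * ℓ + (ℓ - 1) < k := by
    obtain ⟨c, rfl⟩ : ∃ c, b = c + 1 := ⟨b - 1, by omega⟩
    rw [Nat.add_mul] at hbk
    simp only [Nat.add_sub_cancel]
    omega
  have h3 := hin _ h2
  have h4 := Nat.lt_mul_div_succ n hb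
  omega

/-- Periodic extension. -/
def ext {n k : ℕ} (hn : 0 < n) (w : Fin n → Fin k) : ℕ → Fin k :=
  fun j => w ⟨j % n, Nat.mod_lt _ hn⟩

/-- A circular pattern has some block inside a short window. -/
lemma circ_block {n k : ℕ} (ℓ b : ℕ) (hn : 0 < n) (hℓ : 0 < ℓ) (hb : 0 < b) (hbk : b * ℓ ≤ k)
    (w : Fin n → Fin k) (τ : Equiv.Perm (Fin k)) (h : IsCircularPattern τ w) :
    ∃ t, ∃ ht : t < b, ∃ p, p < n ∧ Sub (fun j => ext hn w (p + j)) (n / b) ℓ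
      (fun j : Fin ℓ => τ ⟨t * ℓ + j, by
        have := Nat.mul_le_mul_right ℓ (Nat.succ_le_of_lt ht)
        rw [Nat.succ_mul] at this
        have := j.2
        omega⟩) := by
  obtain ⟨s, i, hi, hτ⟩ := h
  have heq := pattern_eq _ τ i hτ
  let i' : ℕ → ℕ := fun x => if hx : x < k then (i ⟨x, hx⟩ : ℕ) else 0
  have hi' : ∀ x (hx : x < k), i' x = i ⟨x, hx⟩ := fun x hx => dif_pos hx
  have hmono : ∀ x y, x < y → y < k → i' x < i' y := by
    intro x y hxy hy
    rw [hi' x (hxy.trans hy), hi' y hy]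
    exact hi (by simpa using hxy)
  have hlt : ∀ x, x < k → i' x < n := by
    intro x hx
    rw [hi' x hx]; exact (i _).2
  obtain ⟨t, ht, hspan⟩ := short_block k ℓ b n hℓ hb hbk i' hmono hlt
  have hblk : t * ℓ + ℓ ≤ k := by
    have := Nat.mul_le_mul_right ℓ (Nat.succ_le_of_lt ht)
    rw [Nat.succ_mul] at this
    omega
  have hmono' : ∀ x y, x ≤ y → y < k → i' x ≤ i' y := by
    intro x y hxy hy
    rcases hxy.eq_or_lt with rfl | h
    · exact le_rfl
    · exact (hmono x y h hy).le
  refine ⟨t, ht, (i' (t * ℓ) + s) % n, Nat.mod_lt _ hn,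
    fun j => i' (t * ℓ + j) - i' (t * ℓ), ?_, ?_⟩
  · intro x y hxy
    have h1 := hmono (t * ℓ + x) (t * ℓ + y) (by have : (x : ℕ) < y := hxy
                                                 omega) (by have := y.2; omega)
    have h2 := hmono' (t * ℓ) (t * ℓ + x) (by omega) (by have := x.2; omega)
    show i' (t * ℓ + x) - i' (t * ℓ) < i' (t * ℓ + y) - i' (t * ℓ)
    omega
  · intro j
    have hj := j.2
    have hjk : t * ℓ + j < k := by omega
    have h1 := hmono' (t * ℓ) (t * ℓ + j) (by omega) hjk
    have h2 := hmono' (t * ℓ + j) (t * ℓ + (ℓ - 1)) (by omega) (by omega)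
    refine ⟨by show i' (t * ℓ + j) - i' (t * ℓ) < _; omega, ?_⟩
    show ext hn w ((i' (t * ℓ) + s) % n + (i' (t * ℓ + j) - i' (t * ℓ))) = τ ⟨t * ℓ + j, hjk⟩
    rw [← heq ⟨t * ℓ + j, hjk⟩]
    simp only [ext, rotateWord]
    congr 2
    rw [Nat.mod_add_mod, ← hi' _ hjk]
    congr 1
    omega

open Classical in
/-- The main finite inequality. -/
lemma main_count (n k ℓ b : ℕ) (hn : 0 < n) (hℓ : 0 < ℓ) (hb : 0 < b) (hbk : b * ℓ ≤ k)
    (N : ℝ) (hN : ∀ g : ℕ → Fin k,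
      ((Finset.univ.filter (fun x : Fin ℓ → Fin k => Sub g (n / b) ℓ x)).card : ℝ) ≤ N)
    (σ : Fin n → Fin k) (hσ : ∀ τ : Equiv.Perm (Fin k), IsBCP τ σ) :
    (k.descFactorial ℓ : ℝ) ≤ b * (2 * n * N) := by
  let W : ℕ → (Fin n → Fin k) → Finset (Fin ℓ → Fin k) := fun p w =>
    Finset.univ.filter (fun x => Sub (fun j => ext hn w (p + j)) (n / b) ℓ x)
  let B : Finset (Fin ℓ → Fin k) :=
    (Finset.range n).biUnion (fun p => W p σ ∪ W p (reverseWord σ))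
  have hB : (B.card : ℝ) ≤ 2 * n * N := by
    have h1 : B.card ≤ ∑ p ∈ Finset.range n, ((W p σ).card + (W p (reverseWord σ)).card) :=
      Finset.card_biUnion_le.trans (Finset.sum_le_sum (fun p _ => Finset.card_union_le _ _))
    have h2 : (B.card : ℝ) ≤
        ∑ p ∈ Finset.range n, (((W p σ).card : ℝ) + (W p (reverseWord σ)).card) := by
      exact_mod_cast h1
    refine h2.trans ((Finset.sum_le_sum (fun p _ => add_le_add (hN _) (hN _))).trans ?_)
    simp only [Finset.sum_const, Finset.card_range, nsmul_eq_mul]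
    apply le_of_eq; ring
  have hidx : ∀ t : Fin b, ∀ j : Fin ℓ, (t : ℕ) * ℓ + j < k := by
    intro t j
    have := Nat.mul_le_mul_right ℓ (Nat.succ_le_of_lt t.2)
    rw [Nat.succ_mul] at this
    have := j.2
    omega
  let e : Fin b → (Fin ℓ ↪ Fin k) := fun t =>
    ⟨fun j => ⟨t * ℓ + j, hidx t j⟩, by
      intro x y hxy
      have := congrArg Fin.val hxy
      simp only at this
      exact Fin.ext (by omega)⟩
  have hcover : (Finset.univ : Finset (Equiv.Perm (Fin k))) ⊆
      Finset.univ.biUnion (fun t : Fin b =>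
        Finset.univ.filter (fun τ : Equiv.Perm (Fin k) => (fun j => τ (e t j)) ∈ B)) := by
    intro τ _
    simp only [Finset.mem_biUnion, Finset.mem_filter, Finset.mem_univ, true_and]
    rcases hσ τ with h | h
    · obtain ⟨t, ht, p, hp, hs⟩ := circ_block ℓ b hn hℓ hb hbk _ τ h
      refine ⟨⟨t, ht⟩, Finset.mem_biUnion.mpr ⟨p, Finset.mem_range.mpr hp, ?_⟩⟩
      exact Finset.mem_union_left _ (Finset.mem_filter.mpr ⟨Finset.mem_univ _, hs⟩)
    · obtain ⟨t, ht, p, hp, hs⟩ := circ_block ℓ b hn hℓ hb hbk _ τ h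
      refine ⟨⟨t, ht⟩, Finset.mem_biUnion.mpr ⟨p, Finset.mem_range.mpr hp, ?_⟩⟩
      exact Finset.mem_union_right _ (Finset.mem_filter.mpr ⟨Finset.mem_univ _, hs⟩)
  set M := Fintype.card (Equiv.Perm (Fin k)) with hM
  have hMpos : 0 < M := Fintype.card_pos
  have h3 : M * k.descFactorial ℓ ≤ b * (B.card * M) := by
    have h4 := (Finset.card_le_card hcover).trans Finset.card_biUnion_le
    rw [Finset.card_univ, ← hM] at h4
    refine (Nat.mul_le_mul_right _ h4).trans ?_
    rw [Finset.sum_mul]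
    refine (Finset.sum_le_card_nsmul _ _ _ (fun t _ => perm_count k ℓ (e t) B)).trans ?_
    simp [hM]
  have h5 : k.descFactorial ℓ ≤ b * B.card := by
    refine Nat.le_of_mul_le_mul_left ?_ hMpos
    calc _ ≤ _ := h3
      _ = _ := by ring
  calc (k.descFactorial ℓ : ℝ) ≤ b * B.card := by exact_mod_cast h5
    _ ≤ _ := mul_le_mul_of_nonneg_left hB (by positivity)

lemma desc_bound (k ℓ : ℕ) (hk : 0 < k) (h : 2 * ℓ ^ 2 ≤ k) :
    (k : ℝ) ^ ℓ / 2 ≤ k.descFactorial ℓ := by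
  have hk' : (0 : ℝ) < k := by exact_mod_cast hk
  have hlk : ℓ ≤ k := by nlinarith
  have h1 : ((k - ℓ : ℕ) : ℝ) ^ ℓ ≤ k.descFactorial ℓ := by
    have := (Nat.pow_le_pow_left (show k - ℓ ≤ k + 1 - ℓ by omega) ℓ).trans
      (Nat.pow_sub_le_descFactorial k ℓ)
    exact_mod_cast this
  refine le_trans ?_ h1
  rw [Nat.cast_sub hlk]
  have hr : (ℓ : ℝ) / k ≤ 1 := by
    rw [div_le_one hk']; exact_mod_cast hlk
  have h2 := one_add_mul_le_pow (show (-2 : ℝ) ≤ -((ℓ : ℝ) / k) by linarith) ℓ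
  have h3 : (k : ℝ) - ℓ = k * (1 + -((ℓ : ℝ) / k)) := by field_simp; ring
  rw [h3, mul_pow]
  have h4 : (ℓ : ℝ) * (ℓ / k) ≤ 1 / 2 := by
    rw [← mul_div_assoc, div_le_iff₀ hk']
    have : (2 : ℝ) * (ℓ : ℝ) ^ 2 ≤ k := by exact_mod_cast h
    nlinarith
  have h5 : (1 : ℝ) / 2 ≤ (1 + -((ℓ : ℝ) / k)) ^ ℓ := by linarith
  have := mul_le_mul_of_nonneg_left h5 (show (0 : ℝ) ≤ (k : ℝ) ^ ℓ by positivity)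
  linarith

lemma asym (c : ℝ) (hc : 0 < c) : ∃ l0 : ℕ, ∀ ℓ : ℕ, l0 ≤ ℓ →
    2 * (2 * (ℓ : ℝ) + 2) ^ 6 * Real.exp (-c * ℓ) < 1 := by
  have h1 := (Real.tendsto_pow_mul_exp_neg_atTop_nhds_zero 6).comp
    (Filter.Tendsto.const_mul_atTop hc tendsto_natCast_atTop_atTop)
  have hC : 0 < c ^ 6 / (2 * 4 ^ 6) := by positivity
  have h2 := h1.eventually (gt_mem_nhds hC)
  obtain ⟨l0, h3⟩ := Filter.eventually_atTop.mp h2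
  refine ⟨max l0 1, fun ℓ hℓ => ?_⟩
  have h4 := h3 ℓ (le_trans (le_max_left _ _) hℓ)
  have h5 : (1 : ℝ) ≤ ℓ := by exact_mod_cast le_trans (le_max_right _ _) hℓ
  simp only [Function.comp_apply] at h4
  have h6 : (2 * (ℓ : ℝ) + 2) ^ 6 ≤ (4 * ℓ) ^ 6 := pow_le_pow_left₀ (by positivity) (by linarith) 6
  have hE := Real.exp_pos (-c * ℓ)
  rw [show -(c * (ℓ : ℝ)) = -c * ℓ by ring, lt_div_iff₀ (by positivity), mul_pow] at h4
  have h7 : c ^ 6 * ((4 * (ℓ : ℝ)) ^ 6 * 2 * Real.exp (-c * ℓ)) < c ^ 6 * 1 := by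
    calc _ = c ^ 6 * (ℓ : ℝ) ^ 6 * Real.exp (-c * ℓ) * (2 * 4 ^ 6) := by ring
      _ < _ := by rw [mul_one]; exact h4
  have h8 := lt_of_mul_lt_mul_left h7 (by positivity)
  refine lt_of_le_of_lt ?_ h8
  rw [mul_comm 2]
  gcongr

lemma part1 (ε : ℝ) (hε : 0 < ε) (hε2 : ε ≤ 1 / 2) : ∃ K : ℕ, ∀ k : ℕ, K ≤ k →
      ∀ n : ℕ, (n : ℝ) ≤ (1/2 - ε) * (k : ℝ)^2 →
        ∀ σ : Fin n → Fin k, ¬ ∀ τ : Equiv.Perm (Fin k), IsBCP τ σ := by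
  obtain ⟨l0, hl0⟩ := asym (ε ^ 2 / 8) (by positivity)
  obtain ⟨l1, hl1⟩ := exists_nat_gt (1 / ε)
  refine ⟨(2 * (l0 + l1 + 1)) ^ 2, fun k hk n hn σ hσ => ?_⟩
  set ℓ := Nat.sqrt k / 2 with hℓdef
  have hsq : 2 * (l0 + l1 + 1) ≤ Nat.sqrt k := Nat.le_sqrt'.mpr hk
  have hℓ : l0 + l1 + 1 ≤ ℓ := by omega
  have hℓk : 4 * ℓ ^ 2 ≤ k := by
    have h1 : 2 * ℓ ≤ Nat.sqrt k := by omega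
    have h2 := Nat.le_sqrt'.mp h1
    nlinarith
  have hkℓ : k < (2 * ℓ + 2) ^ 2 := by
    have h1 : Nat.sqrt k < 2 * ℓ + 2 := by omega
    exact Nat.sqrt_lt'.mp h1
  have hkpos : 0 < k := by nlinarith
  have hk' : (0 : ℝ) < k := by exact_mod_cast hkpos
  have hn0 : 0 < n := by
    rcases hσ 1 with h | h <;> obtain ⟨s, i, _⟩ := h <;> exact (i ⟨0, hkpos⟩).pos
  have hℓpos : 0 < ℓ := by omega
  set b := k / ℓ with hbdef
  have hbk : b * ℓ ≤ k := Nat.div_mul_le_self k ℓ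
  have hb : 0 < b := Nat.div_pos (by nlinarith) hℓpos
  have hbk2 : k ≤ b * ℓ + ℓ := by
    have h := Nat.lt_div_mul_add (a := k) hℓpos
    rw [← hbdef] at h
    exact h.le
  have hbR : (0 : ℝ) < b := by exact_mod_cast hb
  have hℓR : (0 : ℝ) < ℓ := by exact_mod_cast hℓpos
  have hℓε : (ℓ : ℝ) ≤ ε * k := by
    have h1 : (l1 : ℝ) ≤ ℓ := by exact_mod_cast (by omega : l1 ≤ ℓ)
    have h2 : 1 < ε * ℓ := by
      have := (div_lt_iff₀ hε).mp (lt_of_lt_of_le hl1 h1)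
      linarith
    have h3 : (4 : ℝ) * (ℓ : ℝ) ^ 2 ≤ k := by exact_mod_cast hℓk
    nlinarith
  have hL : ((n / b : ℕ) : ℝ) ≤ (1 / 2 - ε / 2) * k * ℓ := by
    refine Nat.cast_div_le.trans ?_
    rw [div_le_iff₀ hbR]
    refine hn.trans ?_
    have h1 : (k : ℝ) - ℓ ≤ b * ℓ := by
      have : (k : ℝ) ≤ b * ℓ + ℓ := by exact_mod_cast hbk2
      linarith
    have h2 : (1 / 2 - ε) * (k : ℝ) ≤ (1 / 2 - ε / 2) * (b * ℓ) := by
      have := mul_le_mul_of_nonneg_left h1 (show 0 ≤ 1 / 2 - ε / 2 by linarith)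
      nlinarith
    calc (1 / 2 - ε) * (k : ℝ) ^ 2 = ((1 / 2 - ε) * k) * k := by ring
      _ ≤ (1 / 2 - ε / 2) * (b * ℓ) * k := mul_le_mul_of_nonneg_right h2 hk'.le
      _ = _ := by ring
  have h1 := main_count n k ℓ b hn0 hℓpos hb hbk _ (count' k ℓ (n / b) hkpos ε hε hL) σ hσ
  have h2 := desc_bound k ℓ hkpos (by omega)
  have h3 := hl0 ℓ (by omega)
  set E := Real.exp (-(ε ^ 2 / 8) * ℓ) with hE
  have hEpos : 0 < E := Real.exp_pos _
  have hbk3 : (b : ℝ) ≤ k := by exact_mod_cast Nat.div_le_self k ℓ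
  have hnk : 2 * (n : ℝ) ≤ (k : ℝ) ^ 2 := by nlinarith [sq_nonneg (k : ℝ)]
  have h4 : (k : ℝ) ^ ℓ / 2 ≤ k * ((k : ℝ) ^ 2 * ((k : ℝ) ^ ℓ * E)) := by
    refine (h2.trans h1).trans ?_
    gcongr
  have h5 : (k : ℝ) ^ ℓ * 1 ≤ (k : ℝ) ^ ℓ * (2 * (k : ℝ) ^ 3 * E) := by nlinarith
  have h6 := le_of_mul_le_mul_left h5 (by positivity)
  have h7 : (k : ℝ) ^ 3 ≤ (2 * (ℓ : ℝ) + 2) ^ 6 := by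
    have : (k : ℝ) ≤ (2 * (ℓ : ℝ) + 2) ^ 2 := by exact_mod_cast hkℓ.le
    calc (k : ℝ) ^ 3 ≤ ((2 * (ℓ : ℝ) + 2) ^ 2) ^ 3 := pow_le_pow_left₀ hk'.le this 3
      _ = _ := by ring
  have h8 : 2 * (k : ℝ) ^ 3 * E ≤ 2 * (2 * (ℓ : ℝ) + 2) ^ 6 * E := by gcongr
  linarith

end BCPaux

/-- For every `ε > 0` and all sufficiently large `k`, no word `σ ∈ [k]^n` with
`n ≤ (1/2 − ε)k²` contains every `τ ∈ S_k` as a bi-directional circular pattern.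
In particular, for large `k` there is no such `σ` with `n ≤ 3k²/8 + 1/2`,
refuting Gupta's conjecture. -/
theorem no_short_BCP_superpattern :
    (∀ ε : ℝ, 0 < ε → ∃ K : ℕ, ∀ k : ℕ, K ≤ k →
      ∀ n : ℕ, (n : ℝ) ≤ (1/2 - ε) * (k : ℝ)^2 →
        ∀ σ : Fin n → Fin k, ¬ ∀ τ : Equiv.Perm (Fin k), IsBCP τ σ) ∧
    (∃ K : ℕ, ∀ k : ℕ, K ≤ k →
      ∀ n : ℕ, (n : ℝ) ≤ 3 * (k : ℝ)^2 / 8 + 1/2 →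
        ∀ σ : Fin n → Fin k, ¬ ∀ τ : Equiv.Perm (Fin k), IsBCP τ σ) := by
  constructor
  · intro ε hε
    obtain ⟨K, hK⟩ := BCPaux.part1 (min ε (1 / 2)) (by positivity) (min_le_right _ _)
    refine ⟨K, fun k hk n hn => hK k hk n (hn.trans ?_)⟩
    have := min_le_left ε (1 / 2)
    gcongr
  · obtain ⟨K, hK⟩ := BCPaux.part1 (1 / 16) (by norm_num) (by norm_num)
    refine ⟨max K 4, fun k hk n hn => hK k (le_trans (le_max_left _ _) hk) n (hn.trans ?_)⟩
    have h4 : (4 : ℝ) ≤ k := by exact_mod_cast le_trans (le_max_right _ _) hk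
    nlinarith
end

section
/- For every positive integer k there exists a k-DFA A such that for every k-DFA B there is a bijection φ : S_k → S_k with c_A(root(A), τ) ≤ c_B(root(B), φ(τ)) for all τ ∈ S_k (reading permutations as words of length k). Consequently, for every n, |{τ ∈ S_k : c_B(root(B), τ) ≤ n}| ≤ |{τ ∈ S_k : c_A(root(A), τ) ≤ n}|. -/
/-- Words using each letter of `R` exactly once. -/
def IsWordOf {k : ℕ} (R : Finset (Fin k)) (w : List (Fin k)) : Prop :=
  w.Nodup ∧ ∀ t, t ∈ w ↔ t ∈ R

/-- An ordering of the letters putting those of `R` first. -/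
theorem exists_first_perm {k : ℕ} (R : Finset (Fin k)) :
    ∃ π : Equiv.Perm (Fin k), ∀ t ∈ R, (π t : ℕ) < R.card := by
  classical
  have hle : R.card ≤ k := by simpa using R.card_le_univ
  have hc : Fintype.card {t : Fin k // t ∈ R} =
      Fintype.card {i : Fin k // (i : ℕ) < R.card} := by
    rw [Fintype.card_coe, Fintype.card_subtype, Fin.card_filter_val_lt]
    omega
  let e := Fintype.equivOfCardEq hc
  exact ⟨e.extendSubtype, fun t ht => e.extendSubtype_mem t ht⟩

theorem exists_rank_match {k : ℕ} (R S : Finset (Fin k)) (h : R.card = S.card)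
    (ρ π : Equiv.Perm (Fin k)) (hρ : ∀ t ∈ R, (ρ t : ℕ) < R.card) :
    ∃ σ : Fin k → Fin k, (∀ t ∈ R, σ t ∈ S) ∧ Set.InjOn σ R ∧
      ∀ t ∈ R, (ρ t : ℕ) ≤ (π (σ t) : ℕ) := by
  classical
  have hT : (S.map π.toEmbedding).card = R.card := by simp [h]
  let f := (S.map π.toEmbedding).orderEmbOfFin hT
  have key : ∀ t (ht : t ∈ R), ∃ s ∈ S, π s = f ⟨ρ t, hρ t ht⟩ := by
    intro t ht
    have := (S.map π.toEmbedding).orderEmbOfFin_mem hT ⟨ρ t, hρ t ht⟩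
    obtain ⟨s, hs, hs2⟩ := Finset.mem_map.1 this
    exact ⟨s, hs, hs2⟩
  have hle : ∀ (m : ℕ) (hm : m < R.card), m ≤ (f ⟨m, hm⟩ : ℕ) := by
    intro m
    induction m with
    | zero => intro _; exact Nat.zero_le _
    | succ m ih =>
      intro hm
      have h1 := ih (by omega)
      have h2 : f ⟨m, by omega⟩ < f ⟨m + 1, hm⟩ := f.strictMono (by simp [Fin.lt_def])
      have h3 := Fin.lt_def.1 h2
      omega
  refine ⟨fun t => if ht : t ∈ R then (key t ht).choose else t, ?_, ?_, ?_⟩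
  · intro t ht
    simp only [ht, dif_pos]
    exact (key t ht).choose_spec.1
  · intro t ht u hu htu
    have ht' : t ∈ R := ht
    have hu' : u ∈ R := hu
    simp only [ht', hu', dif_pos] at htu
    have h1 := (key t ht').choose_spec.2
    have h2 := (key u hu').choose_spec.2
    rw [htu, h2] at h1
    have h3 := f.injective h1
    simp only [Fin.mk.injEq] at h3
    exact (ρ.injective (Fin.ext h3)).symm
  · intro t ht
    simp only [ht, dif_pos]
    rw [(key t ht).choose_spec.2]
    exact hle _ _

/-- The greedy automaton; states are the sets of letters not yet read. -/
noncomputable def greedy (k : ℕ) : WDFA k (Finset (Fin k)) where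
  trans R t := R.erase t
  root := Finset.univ
  cost R t := ((((exists_first_perm R).choose t : ℕ) + 1 : ℕ) : ℕ∞)

theorem isWordOf_cons {k : ℕ} {R : Finset (Fin k)} {t : Fin k} {w : List (Fin k)} :
    IsWordOf R (t :: w) ↔ t ∈ R ∧ IsWordOf (R.erase t) w := by
  simp only [IsWordOf, List.nodup_cons, List.mem_cons, Finset.mem_erase]
  constructor
  · rintro ⟨⟨h1, h2⟩, h3⟩
    refine ⟨(h3 t).1 (Or.inl rfl), h2, fun u => ⟨fun hu => ⟨?_, (h3 u).1 (Or.inr hu)⟩, ?_⟩⟩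
    · rintro rfl; exact h1 hu
    · rintro ⟨hne, hu⟩
      exact ((h3 u).2 hu).resolve_left hne
  · rintro ⟨h1, h2, h3⟩
    refine ⟨⟨fun h => ((h3 t).1 h).1 rfl, h2⟩, fun u => ⟨?_, fun hu => ?_⟩⟩
    · rintro (rfl | hu)
      · exact h1
      · exact ((h3 u).1 hu).2
    · by_cases hut : u = t
      · exact Or.inl hut
      · exact Or.inr ((h3 u).2 ⟨hut, hu⟩)

theorem greedy_match {k : ℕ} {W : Type} (B : WDFA k W) (hB : B.IsKDFA) (n : ℕ) :
    ∀ (R S : Finset (Fin k)), R.card = n → S.card = n → ∀ b : W,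
      ∃ f : List (Fin k) → List (Fin k),
        (∀ w, IsWordOf R w → IsWordOf S (f w)) ∧
        (∀ w w', IsWordOf R w → IsWordOf R w' → f w = f w' → w = w') ∧
        (∀ w, IsWordOf R w → (greedy k).wordCost R w ≤ B.wordCost b (f w)) := by
  induction n with
  | zero =>
    intro R S hR hS b
    rw [Finset.card_eq_zero] at hR hS
    subst hR hS
    have h0 : ∀ w : List (Fin k), IsWordOf ∅ w → w = [] := by
      intro w hw
      rw [List.eq_nil_iff_forall_not_mem]
      intro a ha
      simpa using (hw.2 a).1 ha
    refine ⟨id, fun w h => h, fun w w' _ _ h => h, fun w hw => ?_⟩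
    rw [h0 w hw]
    simp [WDFA.wordCost]
  | succ n ih =>
    intro R S hR hS b
    obtain ⟨π, hπ⟩ := hB b
    obtain ⟨σ, hσ1, hσ2, hσ3⟩ := exists_rank_match R S (hR.trans hS.symm)
      (exists_first_perm R).choose π (exists_first_perm R).choose_spec
    have step : ∀ t, ∃ f : List (Fin k) → List (Fin k), t ∈ R →
        (∀ w, IsWordOf (R.erase t) w → IsWordOf (S.erase (σ t)) (f w)) ∧
        (∀ w w', IsWordOf (R.erase t) w → IsWordOf (R.erase t) w' → f w = f w' → w = w') ∧
        (∀ w, IsWordOf (R.erase t) w →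
          (greedy k).wordCost (R.erase t) w ≤ B.wordCost (B.trans b (σ t)) (f w)) := by
      intro t
      by_cases ht : t ∈ R
      · obtain ⟨f, hf⟩ := ih (R.erase t) (S.erase (σ t))
          (by rw [Finset.card_erase_of_mem ht]; omega)
          (by rw [Finset.card_erase_of_mem (hσ1 t ht)]; omega) (B.trans b (σ t))
        exact ⟨f, fun _ => hf⟩
      · exact ⟨id, fun h => absurd h ht⟩
    choose g hg using step
    have hnil : ¬ IsWordOf R [] := by
      intro h
      have : R = ∅ := Finset.eq_empty_of_forall_notMem fun t ht => by simpa using (h.2 t).2 ht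
      simp [this] at hR
    refine ⟨fun w => match w with | [] => [] | t :: w => σ t :: g t w, ?_, ?_, ?_⟩
    · rintro (_ | ⟨t, w⟩) hw
      · exact absurd hw hnil
      · rw [isWordOf_cons] at hw
        exact isWordOf_cons.2 ⟨hσ1 t hw.1, (hg t hw.1).1 w hw.2⟩
    · rintro (_ | ⟨t, w⟩) (_ | ⟨t', w'⟩) hw hw' h
      · rfl
      · exact absurd hw hnil
      · exact absurd hw' hnil
      · rw [isWordOf_cons] at hw hw'
        simp only [List.cons.injEq] at h
        have htt : t = t' := hσ2 hw.1 hw'.1 h.1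
        subst htt
        rw [(hg t hw.1).2.1 w w' hw.2 hw'.2 h.2]
    · rintro (_ | ⟨t, w⟩) hw
      · exact absurd hw hnil
      · rw [isWordOf_cons] at hw
        refine add_le_add ?_ ((hg t hw.1).2.2 w hw.2)
        rw [hπ]
        have := hσ3 t hw.1
        exact Nat.cast_le.2 (Nat.succ_le_succ this)

theorem isWordOf_permWord {k : ℕ} (τ : Equiv.Perm (Fin k)) :
    IsWordOf Finset.univ (permWord τ) := by
  refine ⟨(List.nodup_finRange k).map τ.injective, fun t => ?_⟩
  simp only [permWord, List.mem_map, List.mem_finRange, true_and, Finset.mem_univ, iff_true]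
  exact τ.surjective t

theorem permWord_injective {k : ℕ} : Function.Injective (permWord (k := k)) := by
  intro τ τ' h
  ext i
  have := List.map_inj_left.1 h i (List.mem_finRange i)
  rw [this]

theorem exists_permWord {k : ℕ} (w : List (Fin k)) (hw : IsWordOf Finset.univ w) :
    ∃ τ : Equiv.Perm (Fin k), permWord τ = w := by
  have hlen : w.length = k := by
    have h1 := List.toFinset_card_of_nodup hw.1
    have h2 : w.toFinset = Finset.univ := by
      ext t
      rw [List.mem_toFinset, hw.2]
    rw [h2] at h1
    simpa using h1.symm
  let g : Fin k → Fin k := fun i => w.get (Fin.cast hlen.symm i)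
  have hg : Function.Injective g := by
    intro i j hij
    have := List.nodup_iff_injective_get.1 hw.1 hij
    simpa using this
  refine ⟨Equiv.ofBijective g (Finite.injective_iff_bijective.1 hg), ?_⟩
  apply List.ext_getElem
  · simp [permWord, hlen]
  · intro i h1 h2
    simp [permWord, g]

/-- There is an "optimally cheap" `k`-DFA `A`: for every `k`-DFA `B` there is a
bijection `φ : S_k → S_k` with `c_A(root(A), τ) ≤ c_B(root(B), φ(τ))` for all `τ`;
consequently, for every `n`, `B` admits at most as many permutations of cost `≤ n`
as `A` does. -/
theorem exists_optimal_kDFA (k : ℕ) (hk : 0 < k) :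
    ∃ (V : Type) (_ : Fintype V) (A : WDFA k V), A.IsKDFA ∧
      ∀ (W : Type) [Fintype W], ∀ B : WDFA k W, B.IsKDFA →
        (∃ φ : Equiv.Perm (Fin k) → Equiv.Perm (Fin k), Function.Bijective φ ∧
          ∀ τ : Equiv.Perm (Fin k),
            A.wordCost A.root (permWord τ) ≤ B.wordCost B.root (permWord (φ τ))) ∧
        ∀ n : ℕ,
          Nat.card {τ : Equiv.Perm (Fin k) // B.wordCost B.root (permWord τ) ≤ (n : ℕ∞)} ≤
          Nat.card {τ : Equiv.Perm (Fin k) // A.wordCost A.root (permWord τ) ≤ (n : ℕ∞)} := by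
  classical
  refine ⟨Finset (Fin k), inferInstance, greedy k,
    fun R => ⟨(exists_first_perm R).choose, fun t => rfl⟩, ?_⟩
  intro W _ B hB
  have main : ∃ φ : Equiv.Perm (Fin k) → Equiv.Perm (Fin k), Function.Bijective φ ∧
      ∀ τ : Equiv.Perm (Fin k), (greedy k).wordCost (greedy k).root (permWord τ) ≤
        B.wordCost B.root (permWord (φ τ)) := by
    obtain ⟨f, hf1, hf2, hf3⟩ := greedy_match B hB k Finset.univ Finset.univ
      (by simp) (by simp) B.root
    choose φ hφ using fun τ : Equiv.Perm (Fin k) =>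
      exists_permWord (f (permWord τ)) (hf1 _ (isWordOf_permWord τ))
    refine ⟨φ, Finite.injective_iff_bijective.1 ?_, fun τ => ?_⟩
    · intro τ τ' h
      apply permWord_injective
      apply hf2 _ _ (isWordOf_permWord τ) (isWordOf_permWord τ')
      rw [← hφ, ← hφ, h]
    · rw [hφ]
      exact hf3 _ (isWordOf_permWord τ)
  refine ⟨main, fun n => ?_⟩
  obtain ⟨φ, hφ, hc⟩ := main
  let e := Equiv.ofBijective φ hφ
  refine Nat.card_le_card_of_injective
    (fun τ => ⟨e.symm τ.1, (hc (e.symm τ.1)).trans ?_⟩) ?_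
  · have h : φ (e.symm τ.1) = τ.1 := e.apply_symm_apply τ.1
    rw [h]
    exact τ.2
  · intro τ τ' h
    exact Subtype.ext (e.symm.injective (Subtype.ext_iff.1 h))
end

section
/- For all positive integers k and m, the word w ∈ [k]^{mk} obtained by concatenating m copies of the word (1, 2, …, k) contains as a pattern every permutation τ ∈ S_k having at least k − m ascents. -/
/-- The word of length `m·k` obtained by concatenating `m` copies of `(1, 2, …, k)`:
position `j` carries the letter `j mod k`. -/
def repeatedIdentity (k m : ℕ) (hk : 0 < k) : Fin (m * k) → Fin k :=
  fun j => ⟨(j : ℕ) % k, Nat.mod_lt _ hk⟩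

/-- The number of ascents of `τ ∈ S_k`: the number of `j ∈ {1,…,k−1}` with
`τ(j) < τ(j+1)` (indexed here by `j : Fin k` with `j+1 < k`). -/
noncomputable def ascentCount {k : ℕ} (τ : Equiv.Perm (Fin k)) : ℕ :=
  Nat.card {j : Fin k // ∃ h : (j : ℕ) + 1 < k, τ j < τ ⟨(j : ℕ) + 1, h⟩}

/-- The concatenation of `m` copies of `(1, …, k)` contains every `τ ∈ S_k` with at
least `k − m` ascents as a pattern. -/
theorem repeatedIdentity_contains_high_ascent (k m : ℕ) (hk : 0 < k) (hm : 0 < m)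
    (τ : Equiv.Perm (Fin k)) (hasc : k - m ≤ ascentCount τ) :
    ContainsPattern (repeatedIdentity k m hk) τ := by
  classical
  obtain ⟨K, rfl⟩ : ∃ K, k = K + 1 := ⟨k - 1, by omega⟩
  let P : ℕ → Prop := fun i => ∃ h : i + 1 < K + 1, τ ⟨i, by omega⟩ < τ ⟨i + 1, h⟩
  let d : ℕ → ℕ := fun n => ((Finset.range n).filter (fun i => ¬ P i)).card
  have hcard : ascentCount τ = ((Finset.range (K + 1)).filter P).card := by
    unfold ascentCount
    rw [Nat.card_eq_fintype_card, Fintype.card_subtype]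
    refine Finset.card_bij (fun a _ => (a : ℕ)) ?_ ?_ ?_
    · intro a ha
      simp only [Finset.mem_filter, Finset.mem_univ, true_and] at ha
      simp only [Finset.mem_filter, Finset.mem_range]
      exact ⟨a.2, ha⟩
    · intro a _ b _ h
      exact Fin.ext h
    · intro b hb
      simp only [Finset.mem_filter, Finset.mem_range] at hb
      refine ⟨⟨b, hb.1⟩, ?_, rfl⟩
      simp only [Finset.mem_filter, Finset.mem_univ, true_and]
      exact hb.2
  have hsum : ((Finset.range (K + 1)).filter P).card + d (K + 1) = K + 1 := by
    have := Finset.card_filter_add_card_filter_not (s := Finset.range (K + 1)) P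
    simpa [d] using this
  have hsucc : ∀ n, d (n + 1) = d n + if P n then 0 else 1 := by
    intro n
    simp only [d, Finset.range_add_one, Finset.filter_insert]
    by_cases hP : P n
    · simp [hP]
    · simp [hP]
  have hmono : Monotone d := monotone_nat_of_le_succ (fun n => by rw [hsucc]; omega)
  have hlast : d (K + 1) = d K + 1 := by
    rw [hsucc, if_neg]
    rintro ⟨h, -⟩
    omega
  have hlt : ∀ j : Fin (K + 1), d j < m := by
    intro j
    have := hmono (show (j : ℕ) ≤ K by omega)
    omega
  have hbound : ∀ j : Fin (K + 1), d j * (K + 1) + (τ j : ℕ) < m * (K + 1) := by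
    intro j
    have h1 := hlt j
    have h2 := (τ j).2
    have h3 : (d j + 1) * (K + 1) ≤ m * (K + 1) := Nat.mul_le_mul_right _ h1
    rw [Nat.add_mul] at h3
    omega
  have hval : ∀ j : Fin (K + 1),
      repeatedIdentity (K + 1) m hk ⟨d j * (K + 1) + (τ j : ℕ), hbound j⟩ = τ j := by
    intro j
    apply Fin.ext
    simp only [repeatedIdentity]
    rw [Nat.mul_add_mod_self_right, Nat.mod_eq_of_lt (τ j).2]
  refine ⟨fun j => ⟨d j * (K + 1) + (τ j : ℕ), hbound j⟩, ?_, ?_⟩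
  · rw [Fin.strictMono_iff_lt_succ]
    intro i
    rw [Fin.mk_lt_mk]
    simp only [Fin.val_castSucc, Fin.val_succ]
    rw [hsucc]
    by_cases hP : P i
    · obtain ⟨h, h'⟩ := id hP
      rw [if_pos hP, Nat.add_zero (d i)]
      have : (τ i.castSucc : ℕ) < τ i.succ := h'
      omega
    · rw [if_neg hP, Nat.add_mul]
      have := (τ i.castSucc).2
      omega
  · intro j j'
    rw [hval, hval]
end

section
/- Let k be a positive integer and m = ⌈k/2⌉. The word w ∈ [k]^{mk} obtained by concatenating m copies of the word (1, 2, …, k) contains at least k!/2 permutations τ ∈ S_k as patterns. -/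
/-- Number of descents of `τ` strictly before position `j`. -/
def desBefore {n : ℕ} (τ : Equiv.Perm (Fin (n + 1))) (j : Fin (n + 1)) : ℕ :=
  (Finset.univ.filter fun i : Fin n => i.castSucc < j ∧ τ i.succ < τ i.castSucc).card

/-- Number of descents of `τ`. -/
def desTotal {n : ℕ} (τ : Equiv.Perm (Fin (n + 1))) : ℕ :=
  (Finset.univ.filter fun i : Fin n => τ i.succ < τ i.castSucc).card

lemma desBefore_le {n : ℕ} (τ : Equiv.Perm (Fin (n + 1))) (j : Fin (n + 1)) :
    desBefore τ j ≤ desTotal τ := by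
  apply Finset.card_le_card
  intro i
  simp only [Finset.mem_filter, Finset.mem_univ, true_and]
  exact fun h => h.2

lemma desBefore_mono {n : ℕ} (τ : Equiv.Perm (Fin (n + 1))) (i : Fin n) :
    desBefore τ i.castSucc ≤ desBefore τ i.succ := by
  apply Finset.card_le_card
  intro l
  simp only [Finset.mem_filter, Finset.mem_univ, true_and]
  exact fun h => ⟨h.1.trans i.castSucc_lt_succ, h.2⟩

lemma desBefore_lt {n : ℕ} (τ : Equiv.Perm (Fin (n + 1))) (i : Fin n)
    (hd : τ i.succ < τ i.castSucc) :
    desBefore τ i.castSucc < desBefore τ i.succ := by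
  apply Finset.card_lt_card
  rw [Finset.ssubset_iff_of_subset]
  · exact ⟨i, by simp [hd], by simp⟩
  · intro l
    simp only [Finset.mem_filter, Finset.mem_univ, true_and]
    exact fun h => ⟨h.1.trans i.castSucc_lt_succ, h.2⟩

lemma contains_of_desTotal {n m : ℕ} (hk : 0 < n + 1) (τ : Equiv.Perm (Fin (n + 1)))
    (h : desTotal τ < m) : ContainsPattern (repeatedIdentity (n + 1) m hk) τ := by
  refine ⟨fun j => ⟨desBefore τ j * (n + 1) + τ j, ?_⟩, ?_, ?_⟩
  · have h1 : desBefore τ j + 1 ≤ m := by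
      have := desBefore_le τ j
      omega
    have h2 := (τ j).isLt
    have h3 := Nat.mul_le_mul_right (n + 1) h1
    rw [Nat.add_mul] at h3
    omega
  · rw [Fin.strictMono_iff_lt_succ]
    intro i
    rw [Fin.mk_lt_mk]
    rcases lt_trichotomy (τ i.succ) (τ i.castSucc) with hd | hd | hd
    · have h1 : desBefore τ i.castSucc + 1 ≤ _ := desBefore_lt τ i hd
      have h2 := (τ i.castSucc).isLt
      have h3 := Nat.mul_le_mul_right (n + 1) h1
      rw [Nat.add_mul] at h3
      omega
    · have := τ.injective hd
      exact absurd this i.castSucc_lt_succ.ne'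
    · have h3 := Nat.mul_le_mul_right (n + 1) (desBefore_mono τ i)
      have : (τ i.castSucc : ℕ) < τ i.succ := hd
      omega
  · intro j j'
    have key : ∀ j, (desBefore τ j * (n + 1) + (τ j : ℕ)) % (n + 1) = τ j := by
      intro j
      rw [Nat.mul_add_mod', Nat.mod_eq_of_lt (τ j).isLt]
    simp only [repeatedIdentity, Fin.mk_lt_mk, key, Fin.lt_def]

lemma desTotal_add {n : ℕ} (τ : Equiv.Perm (Fin (n + 1))) :
    desTotal τ + desTotal (Fin.revPerm * τ) = n := by
  have h := Finset.card_filter_add_card_filter_not (s := (Finset.univ : Finset (Fin n)))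
    (fun i : Fin n => τ i.succ < τ i.castSucc)
  rw [Finset.card_univ, Fintype.card_fin] at h
  refine Eq.trans ?_ h
  unfold desTotal
  congr 2
  ext i
  have hne : τ i.castSucc ≠ τ i.succ := fun e =>
    i.castSucc_lt_succ.ne (τ.injective e)
  simp only [Finset.mem_filter, Finset.mem_univ, true_and, Equiv.Perm.mul_apply,
    Fin.revPerm_apply, Fin.rev_lt_rev, not_lt]
  exact ⟨fun h => h.le, fun h => lt_of_le_of_ne h hne⟩

/-- With `m = ⌈k/2⌉`, the concatenation of `m` copies of `(1, …, k)` contains at least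
`k!/2` permutations `τ ∈ S_k` as patterns. -/
theorem repeatedIdentity_contains_half (k : ℕ) (hk : 0 < k) :
    ((Nat.factorial k : ℝ)) / 2 ≤
      (Nat.card {τ : Equiv.Perm (Fin k) //
        ContainsPattern (repeatedIdentity k ((k + 1) / 2) hk) τ} : ℝ) := by
  classical
  obtain ⟨n, rfl⟩ : ∃ n, k = n + 1 := ⟨k - 1, by omega⟩
  rw [Nat.card_eq_fintype_card, Fintype.card_subtype]
  set G := Finset.univ.filter fun τ : Equiv.Perm (Fin (n + 1)) =>
    ContainsPattern (repeatedIdentity (n + 1) ((n + 1 + 1) / 2) hk) τ with hG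
  have hsub : (Finset.univ : Finset (Equiv.Perm (Fin (n + 1)))) ⊆
      G ∪ G.image (fun τ => Fin.revPerm * τ) := by
    intro τ _
    have h := desTotal_add τ
    rw [Finset.mem_union, Finset.mem_image]
    by_cases h1 : desTotal τ < (n + 1 + 1) / 2
    · left
      simpa [hG] using contains_of_desTotal hk τ h1
    · right
      refine ⟨Fin.revPerm * τ, ?_, ?_⟩
      · simpa [hG] using contains_of_desTotal hk (Fin.revPerm * τ)
          (show _ < (n + 1 + 1) / 2 by omega)
      · ext i
        simp
  have h1 := Finset.card_le_card hsub
  have h2 := Finset.card_union_le G (G.image (fun τ => Fin.revPerm * τ))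
  have h3 : (G.image (fun τ => Fin.revPerm * τ)).card ≤ G.card := Finset.card_image_le
  rw [Finset.card_univ, Fintype.card_perm, Fintype.card_fin] at h1
  have h4 : Nat.factorial (n + 1) ≤ 2 * G.card := by omega
  have h5 : ((Nat.factorial (n + 1) : ℕ) : ℝ) ≤ 2 * (G.card : ℝ) := by exact_mod_cast h4
  linarith
end
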